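/- arXiv:1902.07136 — 4 statements merged into one kernel-verified Lean document; each statement's English description precedes it below -/
import Mathlib

section
/- Let A be the 3 × 9 matrix over GF(4) with rows (1,0,0,1,0,α,α²,α²,α²), (0,1,0,0,1,α,1,α²,α), (0,0,1,1,1,1,0,1,1); its vector matroid is the Pappus matroid. A field F realizes the column matroid of A if and only if F is infinite, has exactly 4 elements, or has at least 7 elements. (Equivalently, the Pappus matroid is representable over a field F if and only if F = GF(4) or |F| ≥ 7.) -/
/-- A field `F` realizes the column matroid of a matrix `A` over `K` if some matrix `B`
over `F` with the same column index set has exactly the same linearly independent sets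
of columns as `A`. -/
def RealizesColumnMatroid {K : Type*} [Field K] {m k : ℕ}
    (A : Matrix (Fin m) (Fin k) K) (F : Type*) [Field F] : Prop :=
  ∃ (n : ℕ) (B : Matrix (Fin n) (Fin k) F),
    ∀ S : Set (Fin k),
      LinearIndependent F (fun j : S => B.transpose (j : Fin k)) ↔
        LinearIndependent K (fun j : S => A.transpose (j : Fin k))

namespace Pappus

/-- The nine collinear triples of the Pappus configuration. -/
def lines : List (Fin 9 × Fin 9 × Fin 9) :=
  [(0, 1, 6), (0, 2, 3), (0, 5, 8), (1, 2, 4), (1, 7, 8), (2, 5, 7), (3, 4, 8), (3, 6, 7),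
    (4, 5, 6)]

/-- Normal form of a Pappus configuration. -/
def vec {F : Type*} [Field F] (u y : F) : Fin 9 → Fin 3 → F :=
  ![![1, 0, 0], ![0, 1, 0], ![0, 0, 1], ![1, 0, 1], ![0, 1, 1], ![u, y, 1 + y], ![u, -1, 0],
    ![u, y, u * (1 + y)], ![1, y, 1 + y]]

/-- Nondegeneracy of the parameters. -/
def Good {F : Type*} [Field F] (u y : F) : Prop :=
  y ≠ 0 ∧ 1 + y ≠ 0 ∧ u ≠ 0 ∧ u ≠ 1 ∧ u * (1 + y) ≠ y ∧ u ≠ 1 + y ∧ u * y ≠ -1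

/-- Determinant of three vectors. -/
def det3 {F : Type*} [Field F] (a b c : Fin 3 → F) : F :=
  a 0 * (b 1 * c 2 - b 2 * c 1) - a 1 * (b 0 * c 2 - b 2 * c 0) + a 2 * (b 0 * c 1 - b 1 * c 0)

theorem li_triple {F : Type*} [Field F] (v : Fin 9 → Fin 3 → F) (i j k : Fin 9)
    (hij : i < j) (hjk : j < k) :
    LinearIndepOn F v {i, j, k} ↔ det3 (v i) (v j) (v k) ≠ 0 := by
  have hij' : i ≠ j := hij.ne
  have hjk' : j ≠ k := hjk.ne
  have hik' : i ≠ k := (hij.trans hjk).ne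
  have hinj : Function.Injective ![i, j, k] := by
    intro a b h
    fin_cases a <;> fin_cases b <;> simp_all
  have hr : Set.range ![i, j, k] = {i, j, k} := by
    ext x; simp [eq_comm]; tauto
  rw [← hr, linearIndepOn_range_iff hinj]
  have : (v ∘ ![i, j, k]) = (Matrix.of ![v i, v j, v k]).row := by
    funext a; fin_cases a <;> rfl
  rw [this, Matrix.linearIndependent_rows_iff_isUnit, Matrix.isUnit_iff_isUnit_det,
    isUnit_iff_ne_zero, Matrix.det_fin_three]
  simp only [det3]
  have : ∀ a b : F, a = b → (a ≠ 0 ↔ b ≠ 0) := by rintro a b rfl; rfl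
  apply this
  simp
  ring

theorem li_iff {F : Type*} [Field F] (v : Fin 9 → Fin 3 → F)
    (h012 : det3 (v 0) (v 1) (v 2) ≠ 0) (S : Set (Fin 9)) :
    LinearIndepOn F v S ↔
      ∃ i j k, i < j ∧ j < k ∧ S ⊆ {i, j, k} ∧ det3 (v i) (v j) (v k) ≠ 0 := by
  constructor
  · intro h
    obtain ⟨b, -, hSb, hspan, hb⟩ := exists_linearIndepOn_extension h (Set.subset_univ S)
    classical
    have h3 := (li_triple v 0 1 2 (by decide) (by decide)).2 h012
    have hcard : b.ncard = 3 := by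
      apply le_antisymm
      · have := hb.encard_le_toENat_rank
        rw [← Set.Finite.cast_ncard_eq b.toFinite] at this
        have h' : (b.ncard : ℕ∞) ≤ ((3 : ℕ) : ℕ∞) := by simpa using this
        exact_mod_cast h'
      · have e1 := finrank_span_eq_card (R := F) h3
        have e2 := finrank_span_eq_card (R := F) hb
        have hle : Submodule.span F (Set.range fun x : ({0, 1, 2} : Set (Fin 9)) => v x) ≤
            Submodule.span F (Set.range fun x : b => v x) := by
          rw [Submodule.span_le]
          rintro _ ⟨x, rfl⟩
          have := hspan (Set.mem_image_of_mem v (Set.mem_univ x.1))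
          rwa [Set.image_eq_range] at this
        have hf := Submodule.finrank_mono hle
        rw [e1, e2] at hf
        rw [← Nat.card_eq_fintype_card, ← Nat.card_eq_fintype_card] at hf
        change Set.ncard {0, 1, 2} ≤ b.ncard at hf
        have h3' : Set.ncard ({0, 1, 2} : Set (Fin 9)) = 3 := by
          rw [Set.ncard_eq_three]
          exact ⟨0, 1, 2, by decide, by decide, by decide, rfl⟩
        omega
    obtain ⟨x, y, z, hxy, hxz, hyz, rfl⟩ := Set.ncard_eq_three.1 hcard
    have key : ∃ i j k, i < j ∧ j < k ∧ ({x, y, z} : Set (Fin 9)) = {i, j, k} := by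
      revert hxy hxz hyz
      clear * -
      intro hxy hxz hyz
      rcases lt_or_gt_of_ne hxy with h1 | h1 <;> rcases lt_or_gt_of_ne hxz with h2 | h2 <;>
        rcases lt_or_gt_of_ne hyz with h3 | h3
      · exact ⟨x, y, z, h1, h3, rfl⟩
      · exact ⟨x, z, y, h2, h3, by ext; simp; tauto⟩
      · exact absurd (h1.trans h3) h2.not_gt
      · exact ⟨z, x, y, h2, h1, by ext; simp; tauto⟩
      · exact ⟨y, x, z, h1, h2, by ext; simp; tauto⟩
      · exact absurd (h1.trans h2) h3.not_gt
      · exact ⟨y, z, x, h3, h2, by ext; simp; tauto⟩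
      · exact ⟨z, y, x, h3, h1, by ext; simp; tauto⟩
    obtain ⟨i, j, k, hij, hjk, he⟩ := key
    rw [he] at hb hSb
    exact ⟨i, j, k, hij, hjk, hSb, (li_triple v i j k hij hjk).1 hb⟩
  · rintro ⟨i, j, k, hij, hjk, hS, hd⟩
    exact ((li_triple v i j k hij hjk).2 hd).mono hS

theorem det_vec {F : Type*} [Field F] (u y : F) (h : Good u y) (i j k : Fin 9)
    (hij : i < j) (hjk : j < k) :
    det3 (vec u y i) (vec u y j) (vec u y k) ≠ 0 ↔ (i, j, k) ∉ lines := by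
  obtain ⟨h1, h2, h3, h4, h5, h6, h7⟩ := h
  obtain ⟨a1, e1⟩ : ∃ a, a * y = 1 := ⟨y⁻¹, inv_mul_cancel₀ h1⟩
  obtain ⟨a2, e2⟩ : ∃ a, a * (1 + y) = 1 := ⟨_, inv_mul_cancel₀ h2⟩
  obtain ⟨a3, e3⟩ : ∃ a, a * u = 1 := ⟨_, inv_mul_cancel₀ h3⟩
  obtain ⟨a4, e4⟩ : ∃ a, a * (u - 1) = 1 := ⟨_, inv_mul_cancel₀ (sub_ne_zero.2 h4)⟩
  clear h1 h2 h3 h4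
  by_cases hl : (i, j, k) ∈ lines
  · simp only [hl, not_true_eq_false, iff_false, not_not]
    simp only [lines, List.mem_cons, Prod.mk.injEq, List.not_mem_nil, or_false] at hl
    rcases hl with hl | hl | hl | hl | hl | hl | hl | hl | hl <;> obtain ⟨rfl, rfl, rfl⟩ := hl <;>
      simp [det3, vec] <;> try ring
  · simp only [hl, not_false_eq_true, iff_true]
    intro hd
    fin_cases i <;> fin_cases j <;> first | (exfalso; revert hij; decide) | skip
    all_goals
      fin_cases k <;> first
        | (exfalso; revert hjk; decide)
        | (exfalso; revert hl; decide)
        | (clear hij hjk hl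
           simp [det3, vec] at hd
           try grind)

theorem li_congr {F K : Type*} [Field F] [Field K] {u y : F} {u' y' : K} (h : Good u y)
    (h' : Good u' y') (S : Set (Fin 9)) :
    LinearIndepOn F (vec u y) S ↔ LinearIndepOn K (vec u' y') S := by
  have hl : ((0 : Fin 9), (1 : Fin 9), (2 : Fin 9)) ∉ lines := by decide
  rw [li_iff _ ((det_vec u y h 0 1 2 (by decide) (by decide)).2 hl),
    li_iff _ ((det_vec u' y' h' 0 1 2 (by decide) (by decide)).2 hl)]
  constructor
  · rintro ⟨i, j, k, h1, h2, h3, h4⟩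
    exact ⟨i, j, k, h1, h2, h3,
      (det_vec u' y' h' i j k h1 h2).2 ((det_vec u y h i j k h1 h2).1 h4)⟩
  · rintro ⟨i, j, k, h1, h2, h3, h4⟩
    exact ⟨i, j, k, h1, h2, h3,
      (det_vec u y h i j k h1 h2).2 ((det_vec u' y' h' i j k h1 h2).1 h4)⟩

theorem good_alpha {K : Type*} [Field K] [CharP K 2] (a : K) (ha : a ^ 2 = a + 1) :
    Good (a ^ 2) (a ^ 2) := by
  have h2 : (2 : K) = 0 := CharTwo.two_eq_zero
  have h1 : (1 : K) ≠ 0 := one_ne_zero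
  refine ⟨?_, ?_, ?_, ?_, ?_, ?_, ?_⟩ <;> intro h <;> apply h1 <;> grind

theorem mat_li {K : Type*} [Field K] [CharP K 2] (a : K) (ha : a ^ 2 = a + 1)
    (S : Set (Fin 9)) :
    LinearIndependent K (fun j : S => (!![1, 0, 0, 1, 0, a, a ^ 2, a ^ 2, a ^ 2;
          0, 1, 0, 0, 1, a, 1, a ^ 2, a;
          0, 0, 1, 1, 1, 1, 0, 1, 1] : Matrix (Fin 3) (Fin 9) K).transpose (j : Fin 9)) ↔
      LinearIndepOn K (vec (a ^ 2) (a ^ 2)) S := by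
  have h2 : (2 : K) = 0 := CharTwo.two_eq_zero
  have hn : (-1 : K) = 1 := by linear_combination -h2
  have ha0 : a ≠ 0 := by rintro rfl; simp at ha
  let w : Kˣ := Units.mk0 a ha0
  let c : Fin 9 → Kˣ := ![1, 1, 1, 1, 1, w, 1, 1, w]
  have hv : ∀ j, vec (a ^ 2) (a ^ 2) j = c j • (!![1, 0, 0, 1, 0, a, a ^ 2, a ^ 2, a ^ 2;
          0, 1, 0, 0, 1, a, 1, a ^ 2, a;
          0, 0, 1, 1, 1, 1, 0, 1, 1] : Matrix (Fin 3) (Fin 9) K).transpose j := by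
    intro j
    funext i
    fin_cases j <;> fin_cases i <;> simp [vec, c, w, Units.smul_def] <;> grind
  have : LinearIndepOn K (vec (a ^ 2) (a ^ 2)) S ↔ LinearIndependent K
      ((fun j : S => c j) • (fun j : S => (!![1, 0, 0, 1, 0, a, a ^ 2, a ^ 2, a ^ 2;
          0, 1, 0, 0, 1, a, 1, a ^ 2, a;
          0, 0, 1, 1, 1, 1, 0, 1, 1] : Matrix (Fin 3) (Fin 9) K).transpose (j : Fin 9))) := by
    unfold LinearIndepOn
    apply iff_of_eq
    congr 1
    funext j
    exact hv j
  rw [this, LinearIndependent.units_smul_iff]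

theorem exists_good {F : Type*} [Field F] (h : Infinite F ∨ Nat.card F = 4 ∨ 7 ≤ Nat.card F) :
    ∃ u y : F, Good u y := by
  classical
  by_cases h4 : Nat.card F = 4
  · have : Finite F := Nat.finite_of_card_ne_zero (by omega)
    have : Fintype F := Fintype.ofFinite F
    rw [Nat.card_eq_fintype_card] at h4
    obtain ⟨a, ha⟩ := Finset.exists_mem_notMem_of_card_lt_card
      (s := ({0, 1} : Finset F)) (t := Finset.univ)
      (lt_of_le_of_lt Finset.card_le_two (by rw [Finset.card_univ]; omega))
    simp at ha
    have h3 : a ^ 3 = 1 := by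
      have := FiniteField.pow_card_sub_one_eq_one a ha.1
      rwa [h4] at this
    have h2 : (2 : F) = 0 := by
      have := FiniteField.cast_card_eq_zero F
      rw [h4] at this
      have h22 : (2 : F) * 2 = 0 := by rw [← this]; norm_num
      simpa using h22
    have : CharP F 2 := CharTwo.of_one_ne_zero_of_two_eq_zero one_ne_zero h2
    refine ⟨a ^ 2, a ^ 2, good_alpha a ?_⟩
    have : (a - 1) * (a ^ 2 + a + 1) = 0 := by linear_combination h3
    rcases mul_eq_zero.1 this with h | h
    · exact absurd (sub_eq_zero.1 h) ha.2
    · linear_combination h - h2 * (a + 1)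
  · have key : ∀ s : Finset F, s.card ≤ 5 → ∃ a, a ∉ s := by
      intro s hs
      rcases h with h | h | h
      · exact Infinite.exists_notMem_finset s
      · exact absurd h h4
      · have : Finite F := Nat.finite_of_card_ne_zero (by omega)
        have : Fintype F := Fintype.ofFinite F
        rw [Nat.card_eq_fintype_card] at h
        by_contra hc
        push Not at hc
        have : s = Finset.univ := by ext; simp [hc]
        rw [this, Finset.card_univ] at hs
        omega
    obtain ⟨y, hy⟩ := key {0, -1} (Finset.card_le_two.trans (by norm_num))
    obtain ⟨u, hu⟩ := key {0, 1, y / (1 + y), 1 + y, -1 / y} Finset.card_le_five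
    simp only [Finset.mem_insert, Finset.mem_singleton, not_or] at hy hu
    have hy1 : 1 + y ≠ 0 := by
      intro h; apply hy.2; linear_combination h
    refine ⟨u, y, hy.1, hy1, hu.1, hu.2.1, ?_, hu.2.2.2.1, ?_⟩
    · intro h; exact hu.2.2.1 (by rw [eq_div_iff hy1, h])
    · intro h; exact hu.2.2.2.2 (by rw [eq_div_iff hy.1, h])

theorem zmod_aux2 : ∀ u y : ZMod 2, ¬ (y ≠ 0 ∧ 1 + y ≠ 0 ∧ u ≠ 0 ∧ u ≠ 1 ∧ u * (1 + y) ≠ y ∧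
    u ≠ 1 + y ∧ u * y ≠ -1) := by decide

theorem zmod_aux3 : ∀ u y : ZMod 3, ¬ (y ≠ 0 ∧ 1 + y ≠ 0 ∧ u ≠ 0 ∧ u ≠ 1 ∧ u * (1 + y) ≠ y ∧
    u ≠ 1 + y ∧ u * y ≠ -1) := by decide

theorem zmod_aux5 : ∀ u y : ZMod 5, ¬ (y ≠ 0 ∧ 1 + y ≠ 0 ∧ u ≠ 0 ∧ u ≠ 1 ∧ u * (1 + y) ≠ y ∧
    u ≠ 1 + y ∧ u * y ≠ -1) := by decide

theorem not_good_zmod (p : ℕ) [hf : Fact p.Prime] (hp : p = 2 ∨ p = 3 ∨ p = 5) (u y : ZMod p) :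
    ¬ Good u y := by
  rcases hp with rfl | rfl | rfl
  · have := zmod_aux2 u y; unfold Good; assumption
  · have := zmod_aux3 u y; unfold Good; assumption
  · have := zmod_aux5 u y; unfold Good; assumption

theorem card_of_good {F : Type*} [Field F] (u y : F) (h : Good u y) :
    Infinite F ∨ Nat.card F = 4 ∨ 7 ≤ Nat.card F := by
  by_contra hc
  push Not at hc
  obtain ⟨hfin, h4, h7⟩ := hc
  have : Finite F := by simpa using hfin
  have : Fintype F := Fintype.ofFinite F
  rw [Nat.card_eq_fintype_card] at h4 h7
  have h1 : 1 < Fintype.card F := Fintype.one_lt_card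
  have h6 : Fintype.card F ≠ 6 := by
    intro h6
    have := FiniteField.isPrimePow_card F
    rw [h6] at this
    revert this
    rw [isPrimePow_nat_iff_bounded]
    decide
  have hp : Fintype.card F = 2 ∨ Fintype.card F = 3 ∨ Fintype.card F = 5 := by omega
  obtain ⟨p, hpe⟩ : ∃ p, Fintype.card F = p := ⟨_, rfl⟩
  rw [hpe] at hp
  have hpp : p.Prime := by rcases hp with rfl | rfl | rfl <;> norm_num
  have := Fact.mk hpp
  let e := (ZMod.ringEquivOfPrime F hpp hpe).symm
  apply not_good_zmod p hp (e u) (e y)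
  obtain ⟨h1, h2, h3, h4, h5, h6, h7⟩ := h
  refine ⟨?_, ?_, ?_, ?_, ?_, ?_, ?_⟩
  · simpa using h1
  · intro h; apply h2; apply e.injective; simpa using h
  · simpa using h3
  · simpa using h4
  · intro h; apply h5; apply e.injective; simpa using h
  · intro h; apply h6; apply e.injective; simpa using h
  · intro h; apply h7; apply e.injective; simpa using h

theorem good_of_det {F : Type*} [Field F] (c : Fin 9 → Fin 3 → F)
    (h0 : c 0 = ![1, 0, 0]) (h1 : c 1 = ![0, 1, 0]) (h2 : c 2 = ![0, 0, 1])
    (H : ∀ i j k, i < j → j < k → (det3 (c i) (c j) (c k) ≠ 0 ↔ (i, j, k) ∉ lines)) :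
    ∃ u y : F, Good u y := by
  have L : ∀ i j k, i < j → j < k → (i, j, k) ∈ lines → det3 (c i) (c j) (c k) = 0 := by
    intro i j k hij hjk hl
    by_contra hh
    exact (H i j k hij hjk).1 hh hl
  have N : ∀ i j k, i < j → j < k → (i, j, k) ∉ lines → det3 (c i) (c j) (c k) ≠ 0 :=
    fun i j k hij hjk => (H i j k hij hjk).2
  have l023 := L 0 2 3 (by decide) (by decide) (by decide)
  have l124 := L 1 2 4 (by decide) (by decide) (by decide)
  have l016 := L 0 1 6 (by decide) (by decide) (by decide)
  have l348 := L 3 4 8 (by decide) (by decide) (by decide)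
  have l058 := L 0 5 8 (by decide) (by decide) (by decide)
  have l178 := L 1 7 8 (by decide) (by decide) (by decide)
  have l257 := L 2 5 7 (by decide) (by decide) (by decide)
  have l456 := L 4 5 6 (by decide) (by decide) (by decide)
  have n013 := N 0 1 3 (by decide) (by decide) (by decide)
  have n123 := N 1 2 3 (by decide) (by decide) (by decide)
  have n014 := N 0 1 4 (by decide) (by decide) (by decide)
  have n024 := N 0 2 4 (by decide) (by decide) (by decide)
  have n018 := N 0 1 8 (by decide) (by decide) (by decide)
  have n028 := N 0 2 8 (by decide) (by decide) (by decide)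
  have n128 := N 1 2 8 (by decide) (by decide) (by decide)
  have n125 := N 1 2 5 (by decide) (by decide) (by decide)
  have n025 := N 0 2 5 (by decide) (by decide) (by decide)
  have n258 := N 2 5 8 (by decide) (by decide) (by decide)
  have n135 := N 1 3 5 (by decide) (by decide) (by decide)
  have n047 := N 0 4 7 (by decide) (by decide) (by decide)
  have n268 := N 2 6 8 (by decide) (by decide) (by decide)
  clear H L N
  simp only [det3, h0, h1, h2] at *
  simp at *
  generalize c 3 0 = a at *
  generalize c 3 1 = a' at *
  generalize c 3 2 = b at *
  generalize c 4 0 = c' at *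
  generalize c 4 1 = f at *
  generalize c 4 2 = d at *
  generalize c 8 0 = x at *
  generalize c 8 1 = y at *
  generalize c 8 2 = z at *
  generalize c 5 0 = p at *
  generalize c 5 1 = q at *
  generalize c 5 2 = r at *
  generalize c 6 0 = s at *
  generalize c 6 1 = t at *
  generalize c 6 2 = t' at *
  generalize c 7 0 = k at *
  generalize c 7 1 = l at *
  generalize c 7 2 = m at *
  subst l016 l023 l124
  have hz : 1 + y * d * a / (f * x * b) = z * a / (x * b) := by
    field_simp
    linear_combination -l348
  refine ⟨p * y / (x * q), y * d * a / (f * x * b), ?_, ?_, ?_, ?_, ?_, ?_, ?_⟩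
  · simp [*]
  · rw [hz]; simp [*]
  · simp [*]
  · intro h
    rw [div_eq_one_iff_eq (by simp [*])] at h
    apply n258
    linear_combination h
  · rw [hz]
    intro h
    field_simp at h
    apply n047
    have : (x * p) * (f * m - d * l) = 0 := by
      linear_combination (f * p) * l178 + k * h - d * x * l257
    refine (mul_eq_zero.1 this).resolve_left ?_
    try simp only [mul_eq_zero, not_or]
    tauto
  · rw [hz]
    intro h
    field_simp at h
    apply n135
    have : y * (b * p - a * r) = 0 := by
      linear_combination h + a * l058
    refine (mul_eq_zero.1 this).resolve_left ?_
    try simp only [mul_eq_zero, not_or]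
    tauto
  · intro h
    field_simp at h
    apply n268
    have : (p * d * a * y) * (s * y - t * x) = 0 := by
      linear_combination s * h - a * y * x * l456 + x * q * s * l348 - a * x * f * s * l058
    refine (mul_eq_zero.1 this).resolve_left ?_
    try simp only [mul_eq_zero, not_or]
    tauto

theorem good_of_realizes {F K : Type*} [Field F] [Field K] {u y : K} (hg : Good u y) {n : ℕ}
    (v : Fin 9 → Fin n → F)
    (H : ∀ S : Set (Fin 9), LinearIndepOn F v S ↔ LinearIndepOn K (vec u y) S) :
    ∃ u y : F, Good u y := by
  classical
  have hl : ((0 : Fin 9), (1 : Fin 9), (2 : Fin 9)) ∉ lines := by decide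
  have hd := (det_vec u y hg 0 1 2 (by decide) (by decide)).2 hl
  have hli : LinearIndepOn F v {0, 1, 2} :=
    (H _).2 ((li_triple _ 0 1 2 (by decide) (by decide)).2 hd)
  have hinj : Function.Injective (![0, 1, 2] : Fin 3 → Fin 9) := by decide
  have hr : Set.range (![0, 1, 2] : Fin 3 → Fin 9) = {0, 1, 2} := by
    ext x; simp [eq_comm]; tauto
  have hli' : LinearIndependent F (v ∘ ![0, 1, 2]) := by
    rw [← linearIndepOn_range_iff hinj, hr]; exact hli
  have hmem : ∀ j, v j ∈ Submodule.span F (Set.range (v ∘ ![0, 1, 2])) := by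
    intro j
    rw [Set.range_comp, hr]
    by_contra hj
    have hins := hli.insert hj
    rw [H, li_iff _ hd] at hins
    obtain ⟨i', j', k', -, -, hsub, -⟩ := hins
    have hj' : j ∉ ({0, 1, 2} : Set (Fin 9)) := fun h =>
      hj (Submodule.subset_span (Set.mem_image_of_mem v h))
    have c1 := Set.ncard_le_ncard hsub
    have c2 : Set.ncard ({i', j', k'} : Set (Fin 9)) ≤ 3 := by
      have e1 := Set.ncard_insert_le i' {j', k'}
      have e2 := Set.ncard_insert_le j' {k'}
      rw [Set.ncard_singleton] at e2
      omega
    rw [Set.ncard_insert_of_notMem hj'] at c1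
    have h3' : Set.ncard ({0, 1, 2} : Set (Fin 9)) = 3 := by
      rw [Set.ncard_eq_three]
      exact ⟨0, 1, 2, by decide, by decide, by decide, rfl⟩
    omega
  let φ := Fintype.linearCombination F (v ∘ ![0, 1, 2])
  have hφ : Function.Injective φ := by
    rw [linearIndependent_iff_injective_fintypeLinearCombination] at hli'
    exact hli'
  have hex : ∀ j, ∃ c, φ c = v j := by
    intro j
    have := hmem j
    rw [← Fintype.range_linearCombination] at this
    exact this
  choose c hc using hex
  have hLI : ∀ S : Set (Fin 9), LinearIndepOn F c S ↔ LinearIndepOn F v S := by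
    intro S
    have : v = φ ∘ c := by funext j; exact (hc j).symm
    rw [this]
    exact (LinearMap.linearIndependent_iff φ (LinearMap.ker_eq_bot.2 hφ)).symm
  apply good_of_det c
  · apply hφ; rw [hc]; simp [φ, Fintype.linearCombination_apply, Fin.sum_univ_three]
  · apply hφ; rw [hc]; simp [φ, Fintype.linearCombination_apply, Fin.sum_univ_three]
  · apply hφ; rw [hc]; simp [φ, Fintype.linearCombination_apply, Fin.sum_univ_three]
  · intro i j k hij hjk
    rw [← li_triple c i j k hij hjk, hLI, H, li_triple _ i j k hij hjk, det_vec u y hg i j k hij hjk]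

end Pappus

/-- A field `F` realizes the Pappus matroid iff `F` is infinite, has exactly 4 elements,
or has at least 7 elements. -/
theorem stmt_9 (α : GaloisField 2 2) (hα : α ^ 2 = α + 1) (F : Type*) [Field F] :
    RealizesColumnMatroid
      (!![1, 0, 0, 1, 0, α, α ^ 2, α ^ 2, α ^ 2;
          0, 1, 0, 0, 1, α, 1, α ^ 2, α;
          0, 0, 1, 1, 1, 1, 0, 1, 1] :
        Matrix (Fin 3) (Fin 9) (GaloisField 2 2)) F ↔
      (Infinite F ∨ Nat.card F = 4 ∨ 7 ≤ Nat.card F) := by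
  have hg := Pappus.good_alpha α hα
  constructor
  · rintro ⟨n, B, hB⟩
    obtain ⟨u, y, h⟩ := Pappus.good_of_realizes hg B.transpose
      (fun S => (hB S).trans (Pappus.mat_li α hα S))
    exact Pappus.card_of_good u y h
  · intro h
    obtain ⟨u, y, h⟩ := Pappus.exists_good h
    refine ⟨3, Matrix.transpose (Matrix.of (Pappus.vec u y)), fun S => ?_⟩
    rw [Pappus.mat_li α hα S]
    exact Pappus.li_congr h hg S
end

section
/- Let A be the 3 × 9 matrix over GF(4) with rows (0,1,1,1,1,1,0,0,0), (0,1,α,0,0,0,1,1,1), (1,0,0,1,α,α²,1,α,α²); its vector matroid is the matroid P₁. Then: (i) no field of characteristic 3 realizes the column matroid of A; (ii) for every prime p ≠ 3 there exists a field of characteristic p that realizes the column matroid of A; and (iii) there exists a field of characteristic 0 that realizes the column matroid of A. (That is, the characteristic set of P₁ is (𝒫 − {3}) ∪ {0}, where 𝒫 is the set of primes.) -/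
/-- The matrix over `GF(4)` whose vector matroid is `P₁`. -/
noncomputable def P1Matrix (α : GaloisField 2 2) : Matrix (Fin 3) (Fin 9) (GaloisField 2 2) :=
  !![0, 1, 1, 1, 1, 1, 0, 0, 0;
     0, 1, α, 0, 0, 0, 1, 1, 1;
     1, 0, 0, 1, α, α ^ 2, 1, α, α ^ 2]

/-- The matrix over a field `F` attached to a primitive cube root of unity `w`. -/
def BwMat {F : Type*} [Field F] (w : F) : Matrix (Fin 3) (Fin 9) F :=
  !![0, 1, 1, 1, 1, 1, 0, 0, 0;
     0, 1, w, 0, 0, 0, 1, 1, 1;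
     1, 0, 0, 1, w, w ^ 2, -1, -w, -w ^ 2]

/-- Symbolic entries `a + b w`. -/
def symE : Fin 3 → Fin 9 → ℤ × ℤ :=
  ![![(0,0), (1,0), (1,0), (1,0), (1,0), (1,0), (0,0), (0,0), (0,0)],
    ![(0,0), (1,0), (0,1), (0,0), (0,0), (0,0), (1,0), (1,0), (1,0)],
    ![(1,0), (0,0), (0,0), (1,0), (0,1), (-1,-1), (-1,0), (0,-1), (1,1)]]

def symMul (x y : ℤ × ℤ) : ℤ × ℤ :=
  (x.1 * y.1 - x.2 * y.2, x.1 * y.2 + x.2 * y.1 - x.2 * y.2)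

def symSub (x y : ℤ × ℤ) : ℤ × ℤ := (x.1 - y.1, x.2 - y.2)

def symAdd (x y : ℤ × ℤ) : ℤ × ℤ := (x.1 + y.1, x.2 + y.2)

def symDet (i j k : Fin 9) : ℤ × ℤ :=
  symAdd (symSub
    (symMul (symE 0 i) (symSub (symMul (symE 1 j) (symE 2 k)) (symMul (symE 1 k) (symE 2 j))))
    (symMul (symE 0 j) (symSub (symMul (symE 1 i) (symE 2 k)) (symMul (symE 1 k) (symE 2 i)))))
    (symMul (symE 0 k) (symSub (symMul (symE 1 i) (symE 2 j)) (symMul (symE 1 j) (symE 2 i))))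

def symNorm (x : ℤ × ℤ) : ℤ := x.1 * x.1 - x.1 * x.2 + x.2 * x.2

set_option maxRecDepth 100000 in
theorem symDet_norm : ∀ i j k : Fin 9, symDet i j k = (0, 0) ∨ symNorm (symDet i j k) = 1
    ∨ symNorm (symDet i j k) = 3 := by
  decide +kernel

def symEv {F : Type*} [Field F] (w : F) (x : ℤ × ℤ) : F := x.1 + x.2 * w

theorem symEv_mul {F : Type*} [Field F] (w : F) (hw : w ^ 2 + w + 1 = 0) (x y : ℤ × ℤ) :
    symEv w (symMul x y) = symEv w x * symEv w y := by
  simp only [symEv, symMul]; push_cast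
  linear_combination (-(x.2 : F) * y.2) * hw

theorem symEv_sub {F : Type*} [Field F] (w : F) (x y : ℤ × ℤ) :
    symEv w (symSub x y) = symEv w x - symEv w y := by
  simp only [symEv, symSub]; push_cast; ring

theorem symEv_add {F : Type*} [Field F] (w : F) (x y : ℤ × ℤ) :
    symEv w (symAdd x y) = symEv w x + symEv w y := by
  simp only [symEv, symAdd]; push_cast; ring

theorem symEv_entry {F : Type*} [Field F] (w : F) (hw : w ^ 2 + w + 1 = 0) (r : Fin 3)
    (c : Fin 9) : BwMat w r c = symEv w (symE r c) := by
  have h2 : w ^ 2 = -1 - w := by linear_combination hw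
  fin_cases r <;> fin_cases c <;> simp [BwMat, symEv, symE, h2] <;> ring

theorem indep_iff {F : Type*} [Field F] (w : F) (hw : w ^ 2 + w + 1 = 0) (h3 : (3 : F) ≠ 0)
    (f : Fin 3 → Fin 9) :
    LinearIndependent F (fun t => (BwMat w).transpose (f t)) ↔
      symDet (f 0) (f 1) (f 2) ≠ (0, 0) := by
  have h1 : LinearIndependent F (fun t => (BwMat w).transpose (f t)) ↔
      (Matrix.of fun s t => BwMat w s (f t)).det ≠ 0 := by
    rw [← isUnit_iff_ne_zero, ← Matrix.isUnit_iff_isUnit_det,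
      ← Matrix.linearIndependent_cols_iff_isUnit]
    rfl
  have h2 : (Matrix.of fun s t => BwMat w s (f t)).det = symEv w (symDet (f 0) (f 1) (f 2)) := by
    simp only [Matrix.det_fin_three, Matrix.of_apply, symEv_entry w hw, symDet, symEv_mul w hw,
      symEv_sub, symEv_add]
    ring
  rw [h1, h2]
  have key : ∀ x : ℤ × ℤ, symEv w x = 0 → ((symNorm x : ℤ) : F) = 0 := by
    intro x hx
    simp only [symEv] at hx
    simp only [symNorm]; push_cast
    linear_combination ((x.1 : F) + x.2 * w ^ 2) * hx - (x.2 * x.2 * (w - 1) + x.1 * x.2 : F) * hw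
  rcases symDet_norm (f 0) (f 1) (f 2) with h | h | h
  · rw [h]; simp [symEv]
  · constructor
    · intro _ h0; rw [h0] at h; simp [symNorm] at h
    · intro _ h0; have := key _ h0; rw [h] at this; simp at this
  · constructor
    · intro _ h0; rw [h0] at h; simp [symNorm] at h
    · intro _ h0; have := key _ h0; rw [h] at this; exact h3 (by exact_mod_cast this)

theorem indepOn_iff {F : Type*} [Field F] (w : F) (hw : w ^ 2 + w + 1 = 0) (h3 : (3 : F) ≠ 0)
    (S : Set (Fin 9)) :
    LinearIndependent F (fun j : S => (BwMat w).transpose (j : Fin 9)) ↔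
      ∃ f : Fin 3 → Fin 9, symDet (f 0) (f 1) (f 2) ≠ (0, 0) ∧ S ⊆ Set.range f := by
  change LinearIndepOn F (BwMat w).transpose S ↔ _
  constructor
  · intro hS
    obtain ⟨b, -, hSb, hsp, hb⟩ := exists_linearIndepOn_extension hS (Set.subset_univ S)
    have hli := (indep_iff w hw h3 ![0, 1, 3]).2 (by decide)
    have htop : Submodule.span F ((BwMat w).transpose '' b) = ⊤ := by
      rw [eq_top_iff, ← hli.span_eq_top_of_card_eq_finrank (by simp)]
      rw [Submodule.span_le]
      rintro _ ⟨t, rfl⟩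
      exact hsp ⟨_, trivial, rfl⟩
    have hbas : LinearIndependent F (fun j : b => (BwMat w).transpose (j : Fin 9)) := hb
    have hcard : Nat.card b = 3 := by
      have := Module.finrank_eq_nat_card_basis (Module.Basis.mk hbas (by
        rw [← htop, Submodule.span_le]
        rintro _ ⟨j, hj, rfl⟩
        exact Submodule.subset_span ⟨⟨j, hj⟩, rfl⟩))
      simpa using this.symm
    let e : Fin 3 ≃ b := (Finite.equivFinOfCardEq hcard).symm
    refine ⟨fun t => (e t : Fin 9), ?_, ?_⟩
    · exact (indep_iff w hw h3 (fun t => (e t : Fin 9))).1 (hbas.comp e e.injective)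
    · intro x hx
      exact ⟨e.symm ⟨x, hSb hx⟩, by simp⟩
  · rintro ⟨f, hf, hS⟩
    have h := (indep_iff w hw h3 f).2 hf
    have hinj : Function.Injective f := fun a b hab => h.injective (by simp [hab])
    exact LinearIndepOn.mono ((linearIndepOn_range_iff hinj _).2 h) hS

theorem P1_eq (α : GaloisField 2 2) : P1Matrix α = BwMat α := by
  simp [P1Matrix, BwMat, CharTwo.neg_eq]

theorem three_ne : (3 : GaloisField 2 2) ≠ 0 := by
  have h : (2 : GaloisField 2 2) = 0 := CharTwo.two_eq_zero
  intro h3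
  exact one_ne_zero (α := GaloisField 2 2) (by linear_combination h3 - h)

theorem alpha_root (α : GaloisField 2 2) (hα : α ^ 2 = α + 1) : α ^ 2 + α + 1 = 0 := by
  have h : (2 : GaloisField 2 2) = 0 := CharTwo.two_eq_zero
  linear_combination hα + (α + 1) * h

theorem realizes_of_ne {F : Type} [Field F] [IsAlgClosed F] (h3 : (3 : F) ≠ 0)
    (α : GaloisField 2 2) (hα : α ^ 2 = α + 1) : RealizesColumnMatroid (P1Matrix α) F := by
  obtain ⟨w, hw⟩ : ∃ w : F, w ^ 2 + w + 1 = 0 := by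
    have hd : (Polynomial.X ^ 2 + Polynomial.X + 1 : Polynomial F).degree = 2 := by
      compute_degree!
    obtain ⟨w, hw⟩ := IsAlgClosed.exists_root (Polynomial.X ^ 2 + Polynomial.X + 1 : Polynomial F)
      (by rw [hd]; decide)
    exact ⟨w, by simpa [Polynomial.IsRoot] using hw⟩
  refine ⟨3, BwMat w, fun S => ?_⟩
  rw [P1_eq, indepOn_iff w hw h3, indepOn_iff α (alpha_root α hα) three_ne]

theorem not_realizes {F : Type} [Field F] [CharP F 3]
    (α : GaloisField 2 2) (hα : α ^ 2 = α + 1) : ¬ RealizesColumnMatroid (P1Matrix α) F := by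
  rintro ⟨n, B, hB⟩
  have h3 : (3 : F) = 0 := by exact_mod_cast CharP.cast_eq_zero F 3
  set v : Fin 9 → Fin n → F := B.transpose with hv
  have H : ∀ i j k : Fin 9, i ≠ j → i ≠ k → j ≠ k →
      (LinearIndependent F ![v i, v j, v k] ↔ symDet i j k ≠ (0, 0)) := by
    intro i j k hij hik hjk
    have hinj : Function.Injective ![i, j, k] := by
      intro a b; fin_cases a <;> fin_cases b <;> simp [hij, hik, hjk, hij.symm, hik.symm, hjk.symm]
    have e1 : ![v i, v j, v k] = v ∘ ![i, j, k] := by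
      ext a; fin_cases a <;> rfl
    have h1 := indep_iff α (alpha_root α hα) three_ne ![i, j, k]
    have h2 : LinearIndepOn F v (Set.range ![i, j, k]) ↔
      LinearIndepOn _ (P1Matrix α).transpose (Set.range ![i, j, k]) := hB _
    rw [P1_eq, linearIndepOn_range_iff hinj] at h2
    rw [e1, h2]
    exact (linearIndepOn_range_iff hinj _).trans h1
  have I : ∀ i j k : Fin 9, i ≠ j → i ≠ k → j ≠ k → symDet i j k ≠ (0, 0) →
      ∀ a b c : F, a • v i + b • v j + c • v k = 0 → a = 0 ∧ b = 0 ∧ c = 0 := by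
    intro i j k hij hik hjk hd a b c h
    have := Fintype.linearIndependent_iff.1 ((H i j k hij hik hjk).2 hd) ![a, b, c]
      (by simpa [Fin.sum_univ_three] using h)
    exact ⟨this 0, this 1, this 2⟩
  have D : ∀ i j k l : Fin 9, i ≠ j → i ≠ k → j ≠ k → i ≠ l → j ≠ l → symDet i j k = (0, 0) →
      symDet i j l ≠ (0, 0) → ∃ a b : F, v k = a • v i + b • v j := by
    intro i j k l hij hik hjk hil hjl hd hl
    have hn : ¬ LinearIndependent F ![v i, v j, v k] := by
      rw [H i j k hij hik hjk]; simpa using hd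
    rw [Fintype.linearIndependent_iff] at hn
    push Not at hn
    obtain ⟨g, hg, t, ht⟩ := hn
    simp only [Fin.sum_univ_three] at hg
    change g 0 • v i + g 1 • v j + g 2 • v k = 0 at hg
    have hg2 : g 2 ≠ 0 := by
      intro h0
      have := I i j l hij hil hjl hl (g 0) (g 1) 0 (by rw [h0] at hg; simpa using hg)
      fin_cases t
      · exact ht this.1
      · exact ht this.2.1
      · exact ht h0
    refine ⟨-(g 0 / g 2), -(g 1 / g 2), ?_⟩
    funext x
    have hx := congrFun hg x
    simp only [Pi.add_apply, Pi.smul_apply, smul_eq_mul, Pi.zero_apply] at hx ⊢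
    field_simp
    linear_combination hx
  obtain ⟨a4, b4, E4⟩ := D 0 3 4 6 (by decide) (by decide) (by decide) (by decide) (by decide) (by decide) (by decide)
  obtain ⟨a5, b5, E5⟩ := D 0 3 5 6 (by decide) (by decide) (by decide) (by decide) (by decide) (by decide) (by decide)
  obtain ⟨a7, b7, E7⟩ := D 0 6 7 3 (by decide) (by decide) (by decide) (by decide) (by decide) (by decide) (by decide)
  obtain ⟨a8, b8, E8⟩ := D 0 6 8 3 (by decide) (by decide) (by decide) (by decide) (by decide) (by decide) (by decide)
  obtain ⟨e, f, E1⟩ := D 3 6 1 0 (by decide) (by decide) (by decide) (by decide) (by decide) (by decide) (by decide)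
  obtain ⟨l, m, E147⟩ := D 4 7 1 0 (by decide) (by decide) (by decide) (by decide) (by decide) (by decide) (by decide)
  obtain ⟨n', o, E158⟩ := D 5 8 1 0 (by decide) (by decide) (by decide) (by decide) (by decide) (by decide) (by decide)
  obtain ⟨p, q, E238⟩ := D 3 8 2 0 (by decide) (by decide) (by decide) (by decide) (by decide) (by decide) (by decide)
  obtain ⟨r, s, E246⟩ := D 4 6 2 0 (by decide) (by decide) (by decide) (by decide) (by decide) (by decide) (by decide)
  obtain ⟨t, u, E257⟩ := D 5 7 2 0 (by decide) (by decide) (by decide) (by decide) (by decide) (by decide) (by decide)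
  have J := I 0 3 6 (by decide) (by decide) (by decide) (by decide)
  obtain ⟨q1, q2, q3⟩ := J (l * a4 + m * a7) (l * b4 - e) (m * b7 - f) (by
    have h := E147.symm.trans E1
    rw [E4, E7] at h
    rw [← sub_eq_zero] at h
    rw [← h]; module)
  obtain ⟨q4, q5, q6⟩ := J (n' * a5 + o * a8) (n' * b5 - e) (o * b8 - f) (by
    have h := E158.symm.trans E1
    rw [E5, E8] at h
    rw [← sub_eq_zero] at h
    rw [← h]; module)
  obtain ⟨q7, q8, q9⟩ := J (r * a4 - q * a8) (r * b4 - p) (s - q * b8) (by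
    have h := E246.symm.trans E238
    rw [E4, E8] at h
    rw [← sub_eq_zero] at h
    rw [← h]; module)
  obtain ⟨r1, r2, r3⟩ := J (t * a5 + u * a7 - q * a8) (t * b5 - p) (u * b7 - q * b8) (by
    have h := E257.symm.trans E238
    rw [E5, E7, E8] at h
    rw [← sub_eq_zero] at h
    rw [← h]; module)
  have hb4 : b4 ≠ 0 := by
    rintro rfl
    have := I 4 0 6 (by decide) (by decide) (by decide) (by decide) 1 (-a4) 0 (by rw [E4]; module)
    exact one_ne_zero this.1
  have hb5 : b5 ≠ 0 := by
    rintro rfl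
    have := I 5 0 6 (by decide) (by decide) (by decide) (by decide) 1 (-a5) 0 (by rw [E5]; module)
    exact one_ne_zero this.1
  have hb7 : b7 ≠ 0 := by
    rintro rfl
    have := I 7 0 3 (by decide) (by decide) (by decide) (by decide) 1 (-a7) 0 (by rw [E7]; module)
    exact one_ne_zero this.1
  have hb8 : b8 ≠ 0 := by
    rintro rfl
    have := I 8 0 3 (by decide) (by decide) (by decide) (by decide) 1 (-a8) 0 (by rw [E8]; module)
    exact one_ne_zero this.1
  have ha8 : a8 ≠ 0 := by
    rintro rfl
    have := I 8 6 3 (by decide) (by decide) (by decide) (by decide) 1 (-b8) 0 (by rw [E8]; module)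
    exact one_ne_zero this.1
  have hp : p ≠ 0 := by
    rintro rfl
    have := I 2 8 0 (by decide) (by decide) (by decide) (by decide) 1 (-q) 0 (by rw [E238]; module)
    exact one_ne_zero this.1
  have hf : f ≠ 0 := by
    rintro rfl
    have := I 1 3 0 (by decide) (by decide) (by decide) (by decide) 1 (-e) 0 (by rw [E1]; module)
    exact one_ne_zero this.1
  have hdet : e * (q * b8) - f * p ≠ 0 := by
    intro h0
    have := I 1 2 0 (by decide) (by decide) (by decide) (by decide) p (-e) (e * q * a8) (by
      have h1 : f * p = e * (q * b8) := (sub_eq_zero.1 h0).symm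
      rw [E1, E238, E8]
      have : p • (e • v 3 + f • v 6) = (p * e) • v 3 + (e * (q * b8)) • v 6 := by
        rw [← h1]; module
      rw [this]; module)
    exact hp this.1
  obtain ⟨x, rfl⟩ : ∃ x, a4 = b4 * x := ⟨a4 / b4, by field_simp⟩
  obtain ⟨y, rfl⟩ : ∃ y, a5 = b5 * y := ⟨a5 / b5, by field_simp⟩
  obtain ⟨z, rfl⟩ : ∃ z, a7 = b7 * z := ⟨a7 / b7, by field_simp⟩
  obtain ⟨w, rfl⟩ : ∃ w, a8 = b8 * w := ⟨a8 / b8, by field_simp⟩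
  have hw : w ≠ 0 := by rintro rfl; simp at ha8
  set G := q * b8 with hG
  have s1 : e * x + f * z = 0 := by linear_combination q1 - x * q2 - z * q3
  have s2 : e * y + f * w = 0 := by linear_combination q4 - y * q5 - w * q6
  have s3 : G * w = p * x := by linear_combination -q7 + x * q8
  have s4 : G * w = p * y + G * z := by linear_combination -r1 + y * r2 + z * r3
  have s5 : w * (e * G - f * p) ^ 2 = 0 := by
    linear_combination (e * f * p) * s4 + (f * p ^ 2) * s2 + (e * G * p) * s1
      + (e * G * e) * s3 - (w * e * G * f * p) * h3
  rcases mul_eq_zero.1 s5 with h | h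
  · exact hw h
  · exact hdet (pow_eq_zero_iff (by norm_num) |>.1 h)

/-- The characteristic set of the matroid `P₁` is `(𝒫 − {3}) ∪ {0}`: no field of
characteristic 3 realizes it, while for every prime `p ≠ 3` some field of
characteristic `p` realizes it, and some field of characteristic 0 realizes it. -/
theorem stmt_12 (α : GaloisField 2 2) (hα : α ^ 2 = α + 1) :
    (∀ (F : Type) [Field F], CharP F 3 → ¬ RealizesColumnMatroid (P1Matrix α) F) ∧
    (∀ p : ℕ, p.Prime → p ≠ 3 →
      ∃ (F : Type) (_ : Field F), CharP F p ∧ RealizesColumnMatroid (P1Matrix α) F) ∧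
    (∃ (F : Type) (_ : Field F), CharP F 0 ∧ RealizesColumnMatroid (P1Matrix α) F) := by
  refine ⟨fun F _ _ => not_realizes α hα, fun p hp hp3 => ?_, ?_⟩
  · haveI : Fact p.Prime := ⟨hp⟩
    have hc : CharP (AlgebraicClosure (ZMod p)) p := inferInstance
    refine ⟨AlgebraicClosure (ZMod p), inferInstance, hc, realizes_of_ne ?_ α hα⟩
    intro h
    have h' : ((3 : ℕ) : AlgebraicClosure (ZMod p)) = 0 := by exact_mod_cast h
    rw [CharP.cast_eq_zero_iff _ p] at h'
    exact hp3 ((Nat.prime_dvd_prime_iff_eq hp Nat.prime_three).1 h')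
  · exact ⟨ℂ, inferInstance, inferInstance, realizes_of_ne (by norm_num) α hα⟩
end

section
/- Let P₀ be the 5 × 6 matrix over GF(4) with rows (1,1,α,α,α,α²), (α,α,α,α,α²,α), (α,α,1,1,1,1), (1,0,1,0,0,0), (0,1,0,1,0,0), and let A = [I₅ | D₅ | P₀] be the 5 × 21 matrix over GF(4) obtained by placing the 5 × 5 identity matrix, the matrix D₅, and P₀ side by side. A field F realizes the column matroid of A if and only if F contains an element z with z² = z + 1. (The universal partial field of this matroid is the golden-mean partial field 𝔾.) -/
/-- The matrix `[I₅ | D₅ | P₀]` over `GF(4)`, where `D₅` is the (mod-2) signed incidence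
matrix of `K₅` and `P₀` is matrix `I` of the paper. -/
noncomputable def matI5D5P0 (α : GaloisField 2 2) :
    Matrix (Fin 5) (Fin 21) (GaloisField 2 2) :=
  !![1, 0, 0, 0, 0,  1, 1, 1, 1, 0, 0, 0, 0, 0, 0,  1, 1, α, α, α, α ^ 2;
     0, 1, 0, 0, 0,  1, 0, 0, 0, 1, 1, 1, 0, 0, 0,  α, α, α, α, α ^ 2, α;
     0, 0, 1, 0, 0,  0, 1, 0, 0, 1, 0, 0, 1, 1, 0,  α, α, 1, 1, 1, 1;
     0, 0, 0, 1, 0,  0, 0, 1, 0, 0, 1, 0, 1, 0, 1,  1, 0, 1, 0, 0, 0;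
     0, 0, 0, 0, 1,  0, 0, 0, 1, 0, 0, 1, 0, 1, 1,  0, 1, 0, 1, 0, 0]

namespace GM

/-- Integer pairs `a + b τ` with `τ² = τ + 1`. -/
structure Z2 where
  a : Int
  b : Int

instance : DecidableEq Z2 := fun x y =>
  decidable_of_iff (x.a = y.a ∧ x.b = y.b)
    ⟨fun h => by cases x; cases y; simp_all, fun h => by simp [h]⟩

def Z2.add (x y : Z2) : Z2 := ⟨Int.add x.a y.a, Int.add x.b y.b⟩
def Z2.neg (x : Z2) : Z2 := ⟨Int.neg x.a, Int.neg x.b⟩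
def Z2.mulFull (x y : Z2) : Z2 :=
  ⟨Int.add (Int.mul x.a y.a) (Int.mul x.b y.b),
   Int.add (Int.mul x.a y.b) (Int.add (Int.mul x.b y.a) (Int.mul x.b y.b))⟩

/-- Multiplication with a shortcut for a second factor `0`. -/
def Z2.mul (x y : Z2) : Z2 :=
  Bool.rec (Z2.mulFull x y) ⟨Int.ofNat 0, Int.ofNat 0⟩
    (Nat.beq (Nat.add (Int.natAbs y.a) (Int.natAbs y.b)) 0)

theorem Z2.mul_eq (x y : Z2) : Z2.mul x y = Z2.mulFull x y := by
  unfold Z2.mul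
  cases h : Nat.beq (Nat.add (Int.natAbs y.a) (Int.natAbs y.b)) 0 with
  | false => rfl
  | true =>
    have h1 : y.a.natAbs + y.b.natAbs = 0 := Nat.eq_of_beq_eq_true h
    have h2 : y.a = 0 := by omega
    have h3 : y.b = 0 := by omega
    have e : Z2.mulFull x y = ⟨x.a * y.a + x.b * y.b, x.a * y.b + (x.b * y.a + x.b * y.b)⟩ := rfl
    rw [e, h2, h3]
    simp

instance : Add Z2 := ⟨Z2.add⟩
instance : Neg Z2 := ⟨Z2.neg⟩
instance : Mul Z2 := ⟨Z2.mul⟩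

structure V5 (R : Type*) where
  (x0 x1 x2 x3 x4 : R)

structure V10 (R : Type*) where
  (x0 x1 x2 x3 x4 x5 x6 x7 x8 x9 : R)

section
variable {R : Type*} [Add R] [Neg R] [Mul R]

/-- Coordinates in the order 01, 02, 03, 04, 12, 13, 14, 23, 24, 34. -/
def w2 (c d : V5 R) : V10 R :=
  ⟨c.x0 * d.x1 + -(c.x1 * d.x0), c.x0 * d.x2 + -(c.x2 * d.x0),
   c.x0 * d.x3 + -(c.x3 * d.x0), c.x0 * d.x4 + -(c.x4 * d.x0),
   c.x1 * d.x2 + -(c.x2 * d.x1), c.x1 * d.x3 + -(c.x3 * d.x1),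
   c.x1 * d.x4 + -(c.x4 * d.x1), c.x2 * d.x3 + -(c.x3 * d.x2),
   c.x2 * d.x4 + -(c.x4 * d.x2), c.x3 * d.x4 + -(c.x4 * d.x3)⟩

/-- Coordinates in the order 012, 013, 014, 023, 024, 034, 123, 124, 134, 234. -/
def w3 (p : V10 R) (c : V5 R) : V10 R :=
  ⟨p.x0 * c.x2 + (-(p.x1 * c.x1) + p.x4 * c.x0),
   p.x0 * c.x3 + (-(p.x2 * c.x1) + p.x5 * c.x0),
   p.x0 * c.x4 + (-(p.x3 * c.x1) + p.x6 * c.x0),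
   p.x1 * c.x3 + (-(p.x2 * c.x2) + p.x7 * c.x0),
   p.x1 * c.x4 + (-(p.x3 * c.x2) + p.x8 * c.x0),
   p.x2 * c.x4 + (-(p.x3 * c.x3) + p.x9 * c.x0),
   p.x4 * c.x3 + (-(p.x5 * c.x2) + p.x7 * c.x1),
   p.x4 * c.x4 + (-(p.x6 * c.x2) + p.x8 * c.x1),
   p.x5 * c.x4 + (-(p.x6 * c.x3) + p.x9 * c.x1),
   p.x7 * c.x4 + (-(p.x8 * c.x3) + p.x9 * c.x2)⟩

/-- Signed coordinates, indexed by the missing row. -/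
def w4 (t : V10 R) (c : V5 R) : V5 R :=
  ⟨t.x6 * c.x4 + (-(t.x7 * c.x3) + (t.x8 * c.x2 + -(t.x9 * c.x1))),
   -(t.x3 * c.x4) + (t.x4 * c.x3 + (-(t.x5 * c.x2) + t.x9 * c.x0)),
   t.x1 * c.x4 + (-(t.x2 * c.x3) + (t.x5 * c.x1 + -(t.x8 * c.x0))),
   -(t.x0 * c.x4) + (t.x2 * c.x2 + (-(t.x4 * c.x1) + t.x7 * c.x0)),
   t.x0 * c.x3 + (-(t.x1 * c.x2) + (t.x3 * c.x1 + -(t.x6 * c.x0)))⟩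

def w5 (q c : V5 R) : R :=
  q.x0 * c.x0 + (q.x1 * c.x1 + (q.x2 * c.x2 + (q.x3 * c.x3 + q.x4 * c.x4)))

def dt (c0 c1 c2 c3 c4 : V5 R) : R := w5 (w4 (w3 (w2 c0 c1) c2) c3) c4
end

def toV {R : Type*} (v : Fin 5 → R) : V5 R := ⟨v 0, v 1, v 2, v 3, v 4⟩

theorem dt_eq_det {R : Type*} [CommRing R] (M : Matrix (Fin 5) (Fin 5) R) :
    dt (toV (M.transpose 0)) (toV (M.transpose 1)) (toV (M.transpose 2)) (toV (M.transpose 3))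
      (toV (M.transpose 4)) = M.det := by
  simp [dt, w5, w4, w3, w2, toV, Matrix.det_succ_row_zero, Fin.sum_univ_succ, Fin.succAbove]
  ring

def ev {K : Type*} [Field K] (z : K) (x : Z2) : K := (x.a : K) + (x.b : K) * z

theorem ev_add {K : Type*} [Field K] (z : K) (x y : Z2) : ev z (x + y) = ev z x + ev z y := by
  change ((x.a + y.a : ℤ) : K) + ((x.b + y.b : ℤ) : K) * z = _
  simp only [ev]; push_cast; ring

theorem ev_neg {K : Type*} [Field K] (z : K) (x : Z2) : ev z (-x) = - ev z x := by
  change ((-x.a : ℤ) : K) + ((-x.b : ℤ) : K) * z = _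
  simp only [ev]; push_cast; ring

theorem ev_mul {K : Type*} [Field K] (z : K) (hz : z ^ 2 = z + 1) (x y : Z2) :
    ev z (x * y) = ev z x * ev z y := by
  change ev z (Z2.mul x y) = _
  rw [Z2.mul_eq]
  change ((x.a * y.a + x.b * y.b : ℤ) : K) + ((x.a * y.b + (x.b * y.a + x.b * y.b) : ℤ) : K) * z = _
  simp only [ev]; push_cast; linear_combination (-(x.b : K) * y.b) * hz

def evV {K : Type*} [Field K] (z : K) (v : V5 Z2) : V5 K :=
  ⟨ev z v.x0, ev z v.x1, ev z v.x2, ev z v.x3, ev z v.x4⟩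

theorem ev_dt {K : Type*} [Field K] (z : K) (hz : z ^ 2 = z + 1) (c0 c1 c2 c3 c4 : V5 Z2) :
    ev z (dt c0 c1 c2 c3 c4) = dt (evV z c0) (evV z c1) (evV z c2) (evV z c3) (evV z c4) := by
  simp only [dt, w5, w4, w3, w2, evV, ev_add, ev_neg, ev_mul z hz]

/-- zero or of norm `±1` -/
def good (x : Z2) : Prop :=
  x = ⟨0, 0⟩ ∨ x.a * x.a + x.a * x.b - x.b * x.b = 1 ∨ x.a * x.a + x.a * x.b - x.b * x.b = -1

theorem good_ev {K : Type*} [Field K] (z : K) (hz : z ^ 2 = z + 1) (x : Z2) (hx : good x) :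
    ev z x = 0 ↔ x = ⟨0, 0⟩ := by
  constructor
  · intro h
    have key : ((x.a * x.a + x.a * x.b - x.b * x.b : ℤ) : K) = 0 := by
      have : ((x.a * x.a + x.a * x.b - x.b * x.b : ℤ) : K)
          = ev z x * ((x.a : K) + x.b - x.b * z) := by
        simp only [ev]; push_cast; linear_combination ((x.b : K) * x.b) * hz
      rw [this, h, zero_mul]
    rcases hx with h0 | h1 | h1
    · exact h0
    · rw [h1] at key; simp at key
    · rw [h1] at key; simp at key
  · rintro rfl; simp [ev]

/-! Forced evaluation -/

noncomputable section

def fN {β : Type} (n : ℕ) (k : ℕ → β) : β :=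
  Nat.rec (k 0) (fun m _ => k (Nat.succ m)) n

def fI {β : Type} (n : ℤ) (k : ℤ → β) : β :=
  Int.rec (fun n => fN n fun n => k (Int.ofNat n)) (fun n => fN n fun n => k (Int.negSucc n)) n

def fZ {β : Type} (x : Z2) (k : Z2 → β) : β :=
  Z2.rec (fun a b => fI a fun a => fI b fun b => k ⟨a, b⟩) x

def f5 {β : Type} (x : V5 Z2) (k : V5 Z2 → β) : β :=
  V5.rec (fun x0 x1 x2 x3 x4 => fZ x0 fun x0 => fZ x1 fun x1 => fZ x2 fun x2 => fZ x3 fun x3 =>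
    fZ x4 fun x4 => k ⟨x0, x1, x2, x3, x4⟩) x

def f10 {β : Type} (x : V10 Z2) (k : V10 Z2 → β) : β :=
  V10.rec (fun x0 x1 x2 x3 x4 x5 x6 x7 x8 x9 => fZ x0 fun x0 => fZ x1 fun x1 => fZ x2 fun x2 =>
    fZ x3 fun x3 => fZ x4 fun x4 => fZ x5 fun x5 => fZ x6 fun x6 => fZ x7 fun x7 => fZ x8 fun x8 =>
    fZ x9 fun x9 => k ⟨x0, x1, x2, x3, x4, x5, x6, x7, x8, x9⟩) x

theorem fN_eq {β : Type} (n : ℕ) (k : ℕ → β) : fN n k = k n := by cases n <;> rfl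
theorem fI_eq {β : Type} (n : ℤ) (k : ℤ → β) : fI n k = k n := by cases n <;> simp [fI, fN_eq]
theorem fZ_eq {β : Type} (x : Z2) (k : Z2 → β) : fZ x k = k x := by
  cases x; simp [fZ, fI_eq]
theorem f5_eq {β : Type} (x : V5 Z2) (k : V5 Z2 → β) : f5 x k = k x := by
  cases x; simp [f5, fZ_eq]
theorem f10_eq {β : Type} (x : V10 Z2) (k : V10 Z2 → β) : f10 x k = k x := by
  cases x; simp [f10, fZ_eq]

/-- The test on a norm. -/
def tN (n : ℤ) (z : Bool) : Bool :=
  Int.rec (fun n => Nat.rec z (fun m _ => Nat.beq m 0) n) (fun n => Nat.beq n 0) n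

def nrm (x : Z2) : ℤ := Int.add (Int.mul x.a (Int.add x.a x.b)) (Int.neg (Int.mul x.b x.b))

def isZ (x : Z2) : Bool := Bool.and (Nat.beq x.a.natAbs 0) (Nat.beq x.b.natAbs 0)

def tst (x : Z2) : Bool := fZ x fun x => tN (nrm x) (isZ x)

theorem tst_good (x : Z2) (h : tst x = true) : good x := by
  rw [tst, fZ_eq] at h
  have hn : nrm x = x.a * x.a + x.a * x.b - x.b * x.b := by
    change x.a * (x.a + x.b) + -(x.b * x.b) = _
    ring
  unfold good
  rw [← hn]
  revert h
  cases hm : nrm x with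
  | ofNat n =>
    cases n with
    | zero =>
      intro h
      left
      change isZ x = true at h
      obtain ⟨a, b⟩ := x
      simp [isZ] at h
      simp [h]
    | succ m =>
      intro h
      right; left
      have : m = 0 := by simpa [tN] using h
      subst this; rfl
  | negSucc n =>
    intro h
    right; right
    have : n = 0 := by simpa [tN] using h
    subst this; rfl

def g5 (q : V5 Z2) (l : List (V5 Z2)) : Bool :=
  List.rec true (fun c _ r => Bool.rec false r (tst (w5 q c))) l
def g4 (t : V10 Z2) (l : List (V5 Z2)) : Bool :=
  List.rec true (fun c cs r => Bool.rec false r (f5 (w4 t c) fun q => g5 q cs)) l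
def g3 (t : V10 Z2) (l : List (V5 Z2)) : Bool :=
  List.rec true (fun c cs r => Bool.rec false r (f10 (w3 t c) fun q => g4 q cs)) l
def g2 (t : V5 Z2) (l : List (V5 Z2)) : Bool :=
  List.rec true (fun c cs r => Bool.rec false r (f10 (w2 t c) fun q => g3 q cs)) l
def g1 (l : List (V5 Z2)) : Bool :=
  List.rec true (fun c cs r => Bool.rec false r (g2 c cs)) l

theorem brec (a b : Bool) (h : (Bool.rec false a b : Bool) = true) : b = true ∧ a = true := by
  cases b <;> simp_all

theorem g5_ok (q : V5 Z2) (l) (h : g5 q l = true) (c) (hs : List.Sublist [c] l) : tst (w5 q c) = true := by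
  induction l with
  | nil => simp at hs
  | cons d l ih =>
    have h' := brec (g5 q l) _ h
    cases hs with
    | cons _ hs => exact ih h'.2 hs
    | cons_cons _ hs => exact h'.1

theorem g4_ok (q : V10 Z2) (l) (h : g4 q l = true) (c c4) (hs : List.Sublist [c, c4] l) :
    tst (w5 (w4 q c) c4) = true := by
  induction l with
  | nil => simp at hs
  | cons d l ih =>
    have h' := brec (g4 q l) _ h
    cases hs with
    | cons _ hs => exact ih h'.2 hs
    | cons_cons _ hs => rw [f5_eq] at h'; exact g5_ok _ _ h'.1 _ hs

theorem g3_ok (q : V10 Z2) (l) (h : g3 q l = true) (c c3 c4) (hs : List.Sublist [c, c3, c4] l) :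
    tst (w5 (w4 (w3 q c) c3) c4) = true := by
  induction l with
  | nil => simp at hs
  | cons d l ih =>
    have h' := brec (g3 q l) _ h
    cases hs with
    | cons _ hs => exact ih h'.2 hs
    | cons_cons _ hs => rw [f10_eq] at h'; exact g4_ok _ _ h'.1 _ _ hs

theorem g2_ok (q : V5 Z2) (l) (h : g2 q l = true) (c c2 c3 c4) (hs : List.Sublist [c, c2, c3, c4] l) :
    tst (w5 (w4 (w3 (w2 q c) c2) c3) c4) = true := by
  induction l with
  | nil => simp at hs
  | cons d l ih =>
    have h' := brec (g2 q l) _ h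
    cases hs with
    | cons _ hs => exact ih h'.2 hs
    | cons_cons _ hs => rw [f10_eq] at h'; exact g3_ok _ _ h'.1 _ _ _ hs

theorem g1_ok (l) (h : g1 l = true) (c c1 c2 c3 c4) (hs : List.Sublist [c, c1, c2, c3, c4] l) :
    tst (dt c c1 c2 c3 c4) = true := by
  induction l with
  | nil => simp at hs
  | cons d l ih =>
    have h' := brec (g1 l) _ h
    cases hs with
    | cons _ hs => exact ih h'.2 hs
    | cons_cons _ hs => exact g2_ok _ _ h'.1 _ _ _ _ hs

end

abbrev zz : Z2 := ⟨0, 0⟩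
abbrev z1 : Z2 := ⟨1, 0⟩
abbrev m1 : Z2 := ⟨-1, 0⟩
abbrev zt : Z2 := ⟨0, 1⟩
abbrev mt : Z2 := ⟨0, -1⟩

def cols : List (V5 Z2) :=
  [⟨z1, zz, zz, zz, zz⟩, ⟨zz, z1, zz, zz, zz⟩, ⟨zz, zz, z1, zz, zz⟩, ⟨zz, zz, zz, z1, zz⟩,
   ⟨zz, zz, zz, zz, z1⟩,
   ⟨z1, m1, zz, zz, zz⟩, ⟨z1, zz, m1, zz, zz⟩, ⟨z1, zz, zz, m1, zz⟩, ⟨z1, zz, zz, zz, m1⟩,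
   ⟨zz, z1, m1, zz, zz⟩, ⟨zz, z1, zz, m1, zz⟩, ⟨zz, z1, zz, zz, m1⟩,
   ⟨zz, zz, z1, m1, zz⟩, ⟨zz, zz, z1, zz, m1⟩, ⟨zz, zz, zz, z1, m1⟩,
   ⟨m1, zt, mt, z1, zz⟩, ⟨m1, zt, mt, zz, z1⟩,
   ⟨mt, zt, m1, z1, zz⟩, ⟨mt, zt, m1, zz, z1⟩,
   ⟨zt, ⟨-1, -1⟩, z1, zz, zz⟩, ⟨⟨-1, 1⟩, mt, z1, zz, zz⟩]

set_option maxRecDepth 100000 in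
theorem g1_cols : g1 cols.reverse = true := by decide +kernel

/-- The columns of a matrix. -/
def cl {R : Type*} {m k : ℕ} (M : Matrix (Fin m) (Fin k) R) : Fin k → Fin m → R :=
  fun j i => M i j

def col (j : Fin 21) : V5 Z2 := cols.get (j.cast rfl)

theorem cols_rev : cols.reverse = (List.finRange 21).reverse.map col := by
  rw [List.map_reverse]; congr 1

theorem dt_good (f : Fin 5 → Fin 21) (hf : StrictAnti f) :
    good (dt (col (f 0)) (col (f 1)) (col (f 2)) (col (f 3)) (col (f 4))) := by
  apply tst_good
  apply g1_ok _ g1_cols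
  rw [cols_rev]
  have hs : List.Sublist [f 0, f 1, f 2, f 3, f 4] (List.finRange 21).reverse := by
    have e : [f 0, f 1, f 2, f 3, f 4] = List.ofFn f := by simp [List.ofFn_succ]
    rw [e]
    apply List.sublist_of_subperm_of_sortedGE
    · apply List.Nodup.subperm
      · exact List.nodup_ofFn.2 hf.injective
      · intro x _; simp
    · exact (List.sortedGE_ofFn_iff).2 hf.antitone
    · exact (List.sortedLT_finRange 21).sortedLE.reverse
  exact hs.map col

def ofV {R : Type*} (v : V5 R) : Fin 5 → R := ![v.x0, v.x1, v.x2, v.x3, v.x4]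

theorem toV_ofV {R : Type*} (v : V5 R) : toV (ofV v) = v := rfl

/-- The golden-mean representation. -/
def matZ {K : Type*} [Field K] (z : K) : Matrix (Fin 5) (Fin 21) K :=
  fun i j => ofV (evV z (col j)) i

theorem det_sub {K : Type*} [Field K] {k : ℕ} (M : Matrix (Fin 5) (Fin k) K) (f : Fin 5 → Fin k) :
    (M.submatrix id f).det = dt (toV ((cl M) (f 0))) (toV ((cl M) (f 1)))
      (toV ((cl M) (f 2))) (toV ((cl M) (f 3))) (toV ((cl M) (f 4))) := by
  rw [← dt_eq_det]; rfl

theorem det_matZ {K : Type*} [Field K] (z : K) (hz : z ^ 2 = z + 1) (f : Fin 5 → Fin 21) :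
    ((matZ z).submatrix id f).det =
      ev z (dt (col (f 0)) (col (f 1)) (col (f 2)) (col (f 3)) (col (f 4))) := by
  rw [ev_dt z hz, det_sub]; rfl

theorem li_iff_det {K : Type*} [Field K] {k : ℕ} (M : Matrix (Fin 5) (Fin k) K)
    (f : Fin 5 → Fin k) :
    LinearIndependent K ((cl M) ∘ f) ↔ (M.submatrix id f).det ≠ 0 := by
  rw [← isUnit_iff_ne_zero, ← Matrix.isUnit_iff_isUnit_det,
    ← Matrix.linearIndependent_cols_iff_isUnit]
  rfl

def emb (i : Fin 5) : Fin 21 := i.castLE (by norm_num : 5 ≤ 21)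

theorem emb_inj : Function.Injective emb := Fin.castLE_injective (by norm_num : 5 ≤ 21)

theorem transfer {K L : Type*} [Field K] [Field L] (M : Matrix (Fin 5) (Fin 21) K)
    (N : Matrix (Fin 5) (Fin 21) L) (hM : (M.submatrix id emb).det ≠ 0)
    (h : ∀ f : Fin 5 → Fin 21, StrictAnti f →
      (M.submatrix id f).det ≠ 0 → (N.submatrix id f).det ≠ 0) (S : Set (Fin 21))
    (hS : LinearIndepOn K (cl M) S) : LinearIndepOn L (cl N) S := by
  classical
  obtain ⟨T, -, hST, hsp, hT⟩ := exists_linearIndepOn_extension hS (Set.subset_univ S)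
  have hli := (li_iff_det M emb).2 hM
  have htop : Submodule.span K (Set.range ((cl M) ∘ emb)) = ⊤ :=
    hli.span_eq_top_of_card_eq_finrank' (by simp)
  have htop2 : ⊤ ≤ Submodule.span K (Set.range (fun j : T => (cl M) j)) := by
    rw [← htop, Submodule.span_le]
    rintro _ ⟨i, rfl⟩
    have := hsp ⟨emb i, Set.mem_univ _, rfl⟩
    rwa [Set.image_eq_range] at this
  have hcard : T.toFinset.card = 5 := by
    have b := Module.Basis.mk hT htop2
    have := Module.finrank_eq_card_basis b
    simpa using this.symm
  let f : Fin 5 → Fin 21 := T.toFinset.orderEmbOfFin hcard ∘ Fin.rev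
  have hf : StrictAnti f := (T.toFinset.orderEmbOfFin hcard).strictMono.comp_strictAnti
    Fin.rev_strictAnti
  have hr : Set.range f = T := by
    rw [Set.range_comp, Fin.rev_surjective.range_eq, Set.image_univ,
      Finset.range_orderEmbOfFin]
    simp
  have h1 : LinearIndependent K ((cl M) ∘ f) := by
    rw [← linearIndepOn_range_iff hf.injective, hr]; exact hT
  have h2 := (li_iff_det N f).2 (h f hf ((li_iff_det M f).1 h1))
  rw [← linearIndepOn_range_iff hf.injective, hr] at h2
  exact h2.mono hST

theorem det_emb {K : Type*} [Field K] (z : K) (hz : z ^ 2 = z + 1) :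
    ((matZ z).submatrix id emb).det ≠ 0 := by
  rw [det_matZ z hz]
  have : dt (col (emb 0)) (col (emb 1)) (col (emb 2)) (col (emb 3)) (col (emb 4)) = ⟨1, 0⟩ := by
    decide +kernel
  rw [this]; simp [ev]

theorem transferZ {K L : Type*} [Field K] [Field L] (z : K) (hz : z ^ 2 = z + 1) (y : L)
    (hy : y ^ 2 = y + 1) (S : Set (Fin 21))
    (hS : LinearIndepOn K (cl (matZ z)) S) : LinearIndepOn L (cl (matZ y)) S := by
  refine transfer _ _ (det_emb z hz) ?_ S hS
  intro f hf
  rw [det_matZ z hz, det_matZ y hy, Ne, Ne, good_ev z hz _ (dt_good f hf),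
    good_ev y hy _ (dt_good f hf)]
  exact id

theorem mat_eq (α : GaloisField 2 2) (hα : α ^ 2 = α + 1) : matI5D5P0 α = matZ α := by
  have h2 : (-1 : GaloisField 2 2) = 1 := CharTwo.neg_eq 1
  ext i j
  fin_cases i <;> fin_cases j <;>
    simp [matI5D5P0, matZ, ofV, evV, ev, col, cols, h2, hα, add_comm]

/-- Normalised coordinates for an arbitrary realization. -/
theorem exists_coords {K F : Type*} [Field K] [Field F] (A : Matrix (Fin 5) (Fin 21) K)
    (hA : (A.submatrix id emb).det ≠ 0) (n : ℕ) (B : Matrix (Fin n) (Fin 21) F)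
    (hB : ∀ S : Set (Fin 21), LinearIndepOn F (cl B) S ↔ LinearIndepOn K (cl A) S) :
    ∃ C : Matrix (Fin 5) (Fin 21) F, (∀ i, (cl C) (emb i) = Pi.single i 1) ∧
      ∀ f : Fin 5 → Fin 21, Function.Injective f →
        ((C.submatrix id f).det = 0 ↔ (A.submatrix id f).det = 0) := by
  have hBf : ∀ f : Fin 5 → Fin 21, Function.Injective f →
      (LinearIndependent F ((cl B) ∘ f) ↔ (A.submatrix id f).det ≠ 0) := by
    intro f hf
    rw [← linearIndepOn_range_iff hf, hB, linearIndepOn_range_iff hf, li_iff_det]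
  have hv := (hBf emb emb_inj).2 hA
  have hmem : ∀ j, (cl B) j ∈ Submodule.span F (Set.range ((cl B) ∘ emb)) := by
    intro j
    by_contra hj
    have hjn : j ∉ Set.range emb := by
      rintro ⟨i, rfl⟩
      exact hj (Submodule.subset_span ⟨i, rfl⟩)
    have h6 : LinearIndepOn F (cl B) (insert j (Set.range emb)) := by
      rw [linearIndepOn_insert hjn]
      refine ⟨(linearIndepOn_range_iff emb_inj _).2 hv, ?_⟩
      rwa [← Set.range_comp]
    rw [hB, linearIndepOn_insert hjn, ← Set.range_comp] at h6
    apply h6.2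
    rw [((li_iff_det A emb).2 hA).span_eq_top_of_card_eq_finrank' (by simp)]
    trivial
  simp only [Submodule.mem_span_range_iff_exists_fun] at hmem
  choose c hc using hmem
  let Φ : (Fin 5 → F) →ₗ[F] (Fin n → F) := Fintype.linearCombination F ((cl B) ∘ emb)
  have hΦ : ∀ j, Φ (c j) = (cl B) j := fun j => by
    rw [← hc j]; rfl
  have hker : LinearMap.ker Φ = ⊥ := by
    rw [LinearMap.ker_eq_bot]
    exact hv.fintypeLinearCombination_injective
  refine ⟨Matrix.of fun i j => c j i, ?_, ?_⟩
  · intro i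
    apply LinearMap.ker_eq_bot.1 hker
    change Φ (c (emb i)) = _
    rw [hΦ]
    simp [Φ]
  · intro f hf
    rw [← not_iff_not, ← Ne, ← Ne, ← hBf f hf, ← li_iff_det, ← LinearMap.linearIndependent_iff Φ hker]
    have : (Φ ∘ (cl (Matrix.of fun i j => c j i) ∘ f)) = (cl B) ∘ f := by
      funext i
      exact hΦ (f i)
    rw [this]

theorem rel {F : Type*} [Field F] (α : GaloisField 2 2) (hα : α ^ 2 = α + 1)
    (C : Matrix (Fin 5) (Fin 21) F)
    (hC : ∀ f : Fin 5 → Fin 21, Function.Injective f →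
        ((C.submatrix id f).det = 0 ↔ ((matZ α).submatrix id f).det = 0))
    (a b c d e : Fin 21) (hinj : Function.Injective ![a, b, c, d, e])
    (ht : tst (dt (col a) (col b) (col c) (col d) (col e)) = true) :
    dt (toV (cl C a)) (toV (cl C b)) (toV (cl C c)) (toV (cl C d)) (toV (cl C e)) = 0 ↔
      dt (col a) (col b) (col c) (col d) (col e) = ⟨0, 0⟩ := by
  have h := hC _ hinj
  rw [det_matZ α hα, det_sub] at h
  rw [← good_ev α hα _ (tst_good _ ht)]
  exact h

theorem rel0 {F : Type*} [Field F] (α : GaloisField 2 2) (hα : α ^ 2 = α + 1)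
    (C : Matrix (Fin 5) (Fin 21) F)
    (hC : ∀ f : Fin 5 → Fin 21, Function.Injective f →
        ((C.submatrix id f).det = 0 ↔ ((matZ α).submatrix id f).det = 0))
    (a b c d e : Fin 21) (hinj : Function.Injective ![a, b, c, d, e])
    (ht : dt (col a) (col b) (col c) (col d) (col e) = ⟨0, 0⟩) :
    dt (toV (cl C a)) (toV (cl C b)) (toV (cl C c)) (toV (cl C d)) (toV (cl C e)) = 0 := by
  rw [rel α hα C hC a b c d e hinj (by rw [ht]; decide +kernel)]
  exact ht

theorem rel1 {F : Type*} [Field F] (α : GaloisField 2 2) (hα : α ^ 2 = α + 1)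
    (C : Matrix (Fin 5) (Fin 21) F)
    (hC : ∀ f : Fin 5 → Fin 21, Function.Injective f →
        ((C.submatrix id f).det = 0 ↔ ((matZ α).submatrix id f).det = 0))
    (a b c d e : Fin 21) (hinj : Function.Injective ![a, b, c, d, e])
    (ht : tst (dt (col a) (col b) (col c) (col d) (col e)) = true)
    (hn : dt (col a) (col b) (col c) (col d) (col e) ≠ ⟨0, 0⟩) :
    dt (toV (cl C a)) (toV (cl C b)) (toV (cl C c)) (toV (cl C d)) (toV (cl C e)) ≠ 0 := by
  rw [Ne, rel α hα C hC a b c d e hinj ht]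
  exact hn

theorem alg {F : Type*} [Field F] (a5 b5 a6 c6 c12 d12 b9 c9 a7 d7 p q r s Q R S x y w : F)
    (ha5 : ¬ a5 = 0) (hb5 : ¬ b5 = 0) (ha6 : ¬ a6 = 0) (hc6 : ¬ c6 = 0) (hc12 : ¬ c12 = 0)
    (hd12 : ¬ d12 = 0) (hb9 : ¬ b9 = 0) (hc9 : ¬ c9 = 0) (ha7 : ¬ a7 = 0) (hd7 : ¬ d7 = 0)
    (hp : ¬ p = 0) (hq : ¬ q = 0) (hQ : ¬ Q = 0) (hw : ¬ w = 0)
    (r1 : -(b5 * a6 * c9) + -(a5 * c6 * b9) = 0)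
    (r2 : a6 * c12 * d7 + c6 * d12 * a7 = 0)
    (r3 : a7 * c9 * s + -(d7 * c9 * p) = 0)
    (r4 : d7 * c9 * q + -(d7 * b9 * r) = 0)
    (r6 : b5 * d12 * R + -(b5 * c12 * S) = 0)
    (r7 : a6 * b9 * w + (-(a6 * c9 * y) + -(c6 * b9 * x)) = 0)
    (r8 : -(q * S) + s * Q = 0)
    (r9 : -(p * w) + r * x = 0)
    (r10 : Q * w + -(R * y) = 0) : ∃ z : F, z ^ 2 = z + 1 := by
  have k1 : c9 = -(a5 * c6 * b9) / (b5 * a6) := by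
    rw [eq_div_iff (mul_ne_zero hb5 ha6)]; linear_combination -r1
  have k2 : d7 = -(c6 * d12 * a7) / (a6 * c12) := by
    rw [eq_div_iff (mul_ne_zero ha6 hc12)]; linear_combination r2
  have k3 : s = d7 * p / a7 := by
    rw [eq_div_iff ha7]; apply mul_left_cancel₀ hc9; linear_combination r3
  have k4 : r = c9 * q / b9 := by
    rw [eq_div_iff hb9]; apply mul_left_cancel₀ hd7; linear_combination -r4
  have k6 : S = d12 * R / c12 := by
    rw [eq_div_iff hc12]; apply mul_left_cancel₀ hb5; linear_combination -r6
  have k8 : R = s * Q * c12 / (q * d12) := by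
    rw [eq_div_iff (mul_ne_zero hq hd12)]
    rw [k6] at r8
    field_simp at r8
    linear_combination -r8
  have hs : s = -(c6 * d12 * p) / (a6 * c12) := by rw [k3, k2]; field_simp
  have hr : r = -(a5 * c6 * q) / (b5 * a6) := by rw [k4, k1]; field_simp
  have hR : R = -(c6 * p * Q) / (a6 * q) := by rw [k8, hs]; field_simp
  have hx : x = -(p * w * b5 * a6) / (a5 * c6 * q) := by
    rw [eq_div_iff (mul_ne_zero (mul_ne_zero ha5 hc6) hq)]
    rw [hr] at r9
    field_simp at r9
    linear_combination -r9
  have hy : y = -(a6 * q * w) / (c6 * p) := by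
    rw [eq_div_iff (mul_ne_zero hc6 hp)]
    rw [hR] at r10
    field_simp at r10
    apply mul_left_cancel₀ hQ
    linear_combination r10
  refine ⟨q * a5 / (b5 * p), ?_⟩
  rw [k1, hx, hy] at r7
  field_simp at r7 ⊢
  apply mul_left_cancel₀ (mul_ne_zero (mul_ne_zero ha6 hb9) hw)
  linear_combination -r7

theorem forward {F : Type*} [Field F] (α : GaloisField 2 2) (hα : α ^ 2 = α + 1)
    (C : Matrix (Fin 5) (Fin 21) F) (h0 : ∀ i, cl C (emb i) = Pi.single i 1)
    (hC : ∀ f : Fin 5 → Fin 21, Function.Injective f →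
        ((C.submatrix id f).det = 0 ↔ ((matZ α).submatrix id f).det = 0)) :
    ∃ z : F, z ^ 2 = z + 1 := by
  have e0 : toV (cl C 0) = ⟨1, 0, 0, 0, 0⟩ := by
    rw [show cl C 0 = _ from h0 0]; simp [toV]
  have e1 : toV (cl C 1) = ⟨0, 1, 0, 0, 0⟩ := by
    rw [show cl C 1 = _ from h0 1]; simp [toV]
  have e2 : toV (cl C 2) = ⟨0, 0, 1, 0, 0⟩ := by
    rw [show cl C 2 = _ from h0 2]; simp [toV]
  have e3 : toV (cl C 3) = ⟨0, 0, 0, 1, 0⟩ := by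
    rw [show cl C 3 = _ from h0 3]; simp [toV]
  have e4 : toV (cl C 4) = ⟨0, 0, 0, 0, 1⟩ := by
    rw [show cl C 4 = _ from h0 4]; simp [toV]
  have R0 := rel0 α hα C hC
  have R1 := rel1 α hα C hC
  have n5_0 := R1 5 1 2 3 4 (by decide) (by decide +kernel) (by decide +kernel)
  have n5_1 := R1 0 5 2 3 4 (by decide) (by decide +kernel) (by decide +kernel)
  have n5_2 := R0 0 1 5 3 4 (by decide) (by decide +kernel)
  have n5_3 := R0 0 1 2 5 4 (by decide) (by decide +kernel)
  have n5_4 := R0 0 1 2 3 5 (by decide) (by decide +kernel)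
  simp [e0, e1, e2, e3, e4, dt, w2, w3, w4, w5] at n5_0 n5_1 n5_2 n5_3 n5_4
  have n6_0 := R1 6 1 2 3 4 (by decide) (by decide +kernel) (by decide +kernel)
  have n6_1 := R0 0 6 2 3 4 (by decide) (by decide +kernel)
  have n6_2 := R1 0 1 6 3 4 (by decide) (by decide +kernel) (by decide +kernel)
  have n6_3 := R0 0 1 2 6 4 (by decide) (by decide +kernel)
  have n6_4 := R0 0 1 2 3 6 (by decide) (by decide +kernel)
  simp [e0, e1, e2, e3, e4, dt, w2, w3, w4, w5] at n6_0 n6_1 n6_2 n6_3 n6_4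
  have n12_0 := R0 12 1 2 3 4 (by decide) (by decide +kernel)
  have n12_1 := R0 0 12 2 3 4 (by decide) (by decide +kernel)
  have n12_2 := R1 0 1 12 3 4 (by decide) (by decide +kernel) (by decide +kernel)
  have n12_3 := R1 0 1 2 12 4 (by decide) (by decide +kernel) (by decide +kernel)
  have n12_4 := R0 0 1 2 3 12 (by decide) (by decide +kernel)
  simp [e0, e1, e2, e3, e4, dt, w2, w3, w4, w5] at n12_0 n12_1 n12_2 n12_3 n12_4
  have n9_0 := R0 9 1 2 3 4 (by decide) (by decide +kernel)
  have n9_1 := R1 0 9 2 3 4 (by decide) (by decide +kernel) (by decide +kernel)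
  have n9_2 := R1 0 1 9 3 4 (by decide) (by decide +kernel) (by decide +kernel)
  have n9_3 := R0 0 1 2 9 4 (by decide) (by decide +kernel)
  have n9_4 := R0 0 1 2 3 9 (by decide) (by decide +kernel)
  simp [e0, e1, e2, e3, e4, dt, w2, w3, w4, w5] at n9_0 n9_1 n9_2 n9_3 n9_4
  have n7_0 := R1 7 1 2 3 4 (by decide) (by decide +kernel) (by decide +kernel)
  have n7_1 := R0 0 7 2 3 4 (by decide) (by decide +kernel)
  have n7_2 := R0 0 1 7 3 4 (by decide) (by decide +kernel)
  have n7_3 := R1 0 1 2 7 4 (by decide) (by decide +kernel) (by decide +kernel)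
  have n7_4 := R0 0 1 2 3 7 (by decide) (by decide +kernel)
  simp [e0, e1, e2, e3, e4, dt, w2, w3, w4, w5] at n7_0 n7_1 n7_2 n7_3 n7_4
  have n15_0 := R1 15 1 2 3 4 (by decide) (by decide +kernel) (by decide +kernel)
  have n15_1 := R1 0 15 2 3 4 (by decide) (by decide +kernel) (by decide +kernel)
  have n15_2 := R1 0 1 15 3 4 (by decide) (by decide +kernel) (by decide +kernel)
  have n15_3 := R1 0 1 2 15 4 (by decide) (by decide +kernel) (by decide +kernel)
  have n15_4 := R0 0 1 2 3 15 (by decide) (by decide +kernel)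
  simp [e0, e1, e2, e3, e4, dt, w2, w3, w4, w5] at n15_0 n15_1 n15_2 n15_3 n15_4
  have n17_0 := R1 17 1 2 3 4 (by decide) (by decide +kernel) (by decide +kernel)
  have n17_1 := R1 0 17 2 3 4 (by decide) (by decide +kernel) (by decide +kernel)
  have n17_2 := R1 0 1 17 3 4 (by decide) (by decide +kernel) (by decide +kernel)
  have n17_3 := R1 0 1 2 17 4 (by decide) (by decide +kernel) (by decide +kernel)
  have n17_4 := R0 0 1 2 3 17 (by decide) (by decide +kernel)
  simp [e0, e1, e2, e3, e4, dt, w2, w3, w4, w5] at n17_0 n17_1 n17_2 n17_3 n17_4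
  have n20_0 := R1 20 1 2 3 4 (by decide) (by decide +kernel) (by decide +kernel)
  have n20_1 := R1 0 20 2 3 4 (by decide) (by decide +kernel) (by decide +kernel)
  have n20_2 := R1 0 1 20 3 4 (by decide) (by decide +kernel) (by decide +kernel)
  have n20_3 := R0 0 1 2 20 4 (by decide) (by decide +kernel)
  have n20_4 := R0 0 1 2 3 20 (by decide) (by decide +kernel)
  simp [e0, e1, e2, e3, e4, dt, w2, w3, w4, w5] at n20_0 n20_1 n20_2 n20_3 n20_4
  have r1 := R0 5 6 9 3 4 (by decide) (by decide +kernel)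
  have r2 := R0 6 12 7 1 4 (by decide) (by decide +kernel)
  have r3 := R0 7 9 15 1 4 (by decide) (by decide +kernel)
  have r4 := R0 7 9 15 0 4 (by decide) (by decide +kernel)
  have r5 := R0 5 12 17 2 4 (by decide) (by decide +kernel)
  have r6 := R0 5 12 17 0 4 (by decide) (by decide +kernel)
  have r7 := R0 6 9 20 3 4 (by decide) (by decide +kernel)
  have r8 := R0 0 2 15 17 4 (by decide) (by decide +kernel)
  have r9 := R0 1 3 15 20 4 (by decide) (by decide +kernel)
  have r10 := R0 0 3 17 20 4 (by decide) (by decide +kernel)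
  clear R0 R1
  simp [e0, e1, e2, e3, e4, dt, w2, w3, w4, w5, n5_2, n5_3, n5_4, n6_1, n6_3, n6_4, n12_0, n12_1, n12_4, n9_0, n9_3, n9_4, n7_1, n7_2, n7_4, n15_4, n17_4, n20_3, n20_4] at r1 r2 r3 r4 r5 r6 r7 r8 r9 r10
  exact alg _ _ _ _ _ _ _ _ _ _ _ _ _ _ _ _ _ _ _ _ n5_0 n5_1 n6_0 n6_2 n12_2 n12_3 n9_1 n9_2 n7_0
    n7_3 n15_0 n15_1 n17_1 n20_2 r1 r2 r3 r4 r6 r7 r8 r9 r10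
end GM

/-- A field `F` realizes the column matroid of `[I₅ | D₅ | P₀]` iff `F` contains a root
of `x² − x − 1` (the universal partial field of this matroid is the golden-mean partial
field `𝔾`). -/
theorem stmt_13 (α : GaloisField 2 2) (hα : α ^ 2 = α + 1) (F : Type*) [Field F] :
    RealizesColumnMatroid (matI5D5P0 α) F ↔ ∃ z : F, z ^ 2 = z + 1 := by
  constructor
  · rintro ⟨n, B, hB⟩
    rw [GM.mat_eq α hα] at hB
    obtain ⟨C, h0, hC⟩ := GM.exists_coords (GM.matZ α) (GM.det_emb α hα) n B hB
    exact GM.forward α hα C h0 hC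
  · rintro ⟨z, hz⟩
    rw [GM.mat_eq α hα]
    exact ⟨5, GM.matZ z, fun S => ⟨GM.transferZ z hz α hα S, GM.transferZ α hα z hz S⟩⟩
end

section
/- Let P₀ be the 4 × 5 matrix over GF(4) with rows (1,α²,1,α,α²), (α,α,α²,1,0), (α,1,α²,α,α), (1,0,1,1,1), and let A = [I₄ | D₄ | P₀] be the 4 × 15 matrix over GF(4) obtained by placing the 4 × 4 identity matrix, the matrix D₄, and P₀ side by side. A field F realizes the column matroid of A if and only if F contains an element z with z² = z + 1. (The universal partial field of this matroid is the golden-mean partial field 𝔾.) -/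
/-- The matrix `[I₄ | D₄ | P₀]` over `GF(4)`, where `D₄` is the (mod-2) signed incidence
matrix of `K₄` and `P₀` is matrix `III` of the paper. -/
noncomputable def matI4D4P0 (α : GaloisField 2 2) :
    Matrix (Fin 4) (Fin 15) (GaloisField 2 2) :=
  !![1, 0, 0, 0,  1, 1, 1, 0, 0, 0,  1, α ^ 2, 1, α, α ^ 2;
     0, 1, 0, 0,  1, 0, 0, 1, 1, 0,  α, α, α ^ 2, 1, 0;
     0, 0, 1, 0,  0, 1, 0, 1, 0, 1,  α, 1, α ^ 2, α, α;
     0, 0, 0, 1,  0, 0, 1, 0, 1, 1,  1, 0, 1, 1, 1]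

/-! ### Computable arithmetic in `ℤ[τ]`, `τ² = τ + 1`; `(a, b)` stands for `a + b τ`. -/

def gAdd (x y : ℤ × ℤ) : ℤ × ℤ := (x.1 + y.1, x.2 + y.2)

def gSub (x y : ℤ × ℤ) : ℤ × ℤ := (x.1 - y.1, x.2 - y.2)

def gMul (x y : ℤ × ℤ) : ℤ × ℤ :=
  (x.1 * y.1 + x.2 * y.2, x.1 * y.2 + x.2 * y.1 + x.2 * y.2)

/-- Norm from `ℤ[τ]` to `ℤ`. -/
def gNorm (x : ℤ × ℤ) : ℤ := x.1 * x.1 + x.1 * x.2 - x.2 * x.2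

/-- The columns of the lift of `[I₄ | D₄ | P₀]` to `ℤ[τ]`. -/
def gCol : Fin 15 → Fin 4 → ℤ × ℤ :=
  ![![(1, 0), (0, 0), (0, 0), (0, 0)],
    ![(0, 0), (1, 0), (0, 0), (0, 0)],
    ![(0, 0), (0, 0), (1, 0), (0, 0)],
    ![(0, 0), (0, 0), (0, 0), (1, 0)],
    ![(1, 0), (-1, 0), (0, 0), (0, 0)],
    ![(1, 0), (0, 0), (-1, 0), (0, 0)],
    ![(1, 0), (0, 0), (0, 0), (-1, 0)],
    ![(0, 0), (1, 0), (-1, 0), (0, 0)],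
    ![(0, 0), (1, 0), (0, 0), (-1, 0)],
    ![(0, 0), (0, 0), (1, 0), (-1, 0)],
    ![(1, 0), (0, 1), (0, -1), (-1, 0)],
    ![(-1, 1), (2, -1), (-1, 0), (0, 0)],
    ![(1, 0), (-1, 1), (1, -1), (-1, 0)],
    ![(0, 1), (1, 0), (0, -1), (-1, 0)],
    ![(1, 1), (0, 0), (0, -1), (-1, 0)]]

/-- `2 × 2` minors. -/
def gMin (a b c d : ℤ × ℤ) : ℤ × ℤ := gSub (gMul a d) (gMul b c)

/-- The determinant with columns `p q r s`, Laplace expansion along two columns. -/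
def gDet (p q r s : Fin 4 → ℤ × ℤ) : ℤ × ℤ :=
  gAdd (gSub (gMul (gMin (p 0) (q 0) (p 1) (q 1)) (gMin (r 2) (s 2) (r 3) (s 3)))
        (gMul (gMin (p 0) (q 0) (p 2) (q 2)) (gMin (r 1) (s 1) (r 3) (s 3))))
   (gAdd (gAdd (gMul (gMin (p 0) (q 0) (p 3) (q 3)) (gMin (r 1) (s 1) (r 2) (s 2)))
               (gMul (gMin (p 1) (q 1) (p 2) (q 2)) (gMin (r 0) (s 0) (r 3) (s 3))))
     (gSub (gMul (gMin (p 2) (q 2) (p 3) (q 3)) (gMin (r 0) (s 0) (r 1) (s 1)))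
           (gMul (gMin (p 1) (q 1) (p 3) (q 3)) (gMin (r 0) (s 0) (r 2) (s 2)))))

/-- `x` is zero or a unit of `ℤ[τ]`. -/
def gOk (x : ℤ × ℤ) : Prop := x = (0, 0) ∨ gNorm x = 1 ∨ gNorm x = -1

instance (x : ℤ × ℤ) : Decidable (gOk x) := by unfold gOk; infer_instance

theorem gOk_all : ∀ i j : Fin 15, i < j → ∀ k : Fin 15, j < k → ∀ l : Fin 15, k < l →
    gOk (gDet (gCol i) (gCol j) (gCol k) (gCol l)) := by
  decide +kernel

/-- Evaluation of an element of `ℤ[τ]` at `z`. -/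
def gEv {K : Type*} [Field K] (z : K) (x : ℤ × ℤ) : K := (x.1 : K) + (x.2 : K) * z

/-- The lifted matrix evaluated at `z`. -/
def gMat {K : Type*} [Field K] (z : K) : Matrix (Fin 4) (Fin 15) K :=
  Matrix.of fun i j => gEv z (gCol j i)

section
variable {K : Type*} [Field K] {z : K}

theorem gEv_add (x y : ℤ × ℤ) : gEv z (gAdd x y) = gEv z x + gEv z y := by
  simp only [gEv, gAdd]; push_cast; ring

theorem gEv_sub (x y : ℤ × ℤ) : gEv z (gSub x y) = gEv z x - gEv z y := by
  simp only [gEv, gSub]; push_cast; ring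

theorem gEv_mul (hz : z ^ 2 = z + 1) (x y : ℤ × ℤ) :
    gEv z (gMul x y) = gEv z x * gEv z y := by
  simp only [gEv, gMul]; push_cast; linear_combination (-(x.2 : K) * y.2) * hz

theorem gEv_norm (hz : z ^ 2 = z + 1) (x : ℤ × ℤ) :
    gEv z x * gEv z (x.1 + x.2, -x.2) = (gNorm x : K) := by
  simp only [gEv, gNorm]; push_cast; linear_combination (-(x.2 : K) * x.2) * hz

theorem gEv_eq_zero (hz : z ^ 2 = z + 1) {x : ℤ × ℤ} (hx : gOk x) :
    gEv z x = 0 ↔ x = (0, 0) := by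
  constructor
  · intro h
    have h2 := gEv_norm hz x
    rw [h, zero_mul] at h2
    rcases hx with hx | hx | hx
    · exact hx
    · rw [hx] at h2; simp at h2
    · rw [hx] at h2; simp at h2
  · rintro rfl; simp [gEv]

theorem det_four (M : Matrix (Fin 4) (Fin 4) K) : M.det =
    M 0 0 * (M 1 1 * (M 2 2 * M 3 3 - M 2 3 * M 3 2) - M 1 2 * (M 2 1 * M 3 3 - M 2 3 * M 3 1)
      + M 1 3 * (M 2 1 * M 3 2 - M 2 2 * M 3 1))
    - M 0 1 * (M 1 0 * (M 2 2 * M 3 3 - M 2 3 * M 3 2) - M 1 2 * (M 2 0 * M 3 3 - M 2 3 * M 3 0)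
      + M 1 3 * (M 2 0 * M 3 2 - M 2 2 * M 3 0))
    + M 0 2 * (M 1 0 * (M 2 1 * M 3 3 - M 2 3 * M 3 1) - M 1 1 * (M 2 0 * M 3 3 - M 2 3 * M 3 0)
      + M 1 3 * (M 2 0 * M 3 1 - M 2 1 * M 3 0))
    - M 0 3 * (M 1 0 * (M 2 1 * M 3 2 - M 2 2 * M 3 1) - M 1 1 * (M 2 0 * M 3 2 - M 2 2 * M 3 0)
      + M 1 2 * (M 2 0 * M 3 1 - M 2 1 * M 3 0)) := by
  rw [Matrix.det_succ_row_zero]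
  simp [Fin.sum_univ_succ, Matrix.det_fin_three, Fin.succAbove, Matrix.submatrix]
  ring

theorem gMat_det (hz : z ^ 2 = z + 1) (s : Fin 4 → Fin 15) :
    ((gMat z).submatrix id s).det =
      gEv z (gDet (gCol (s 0)) (gCol (s 1)) (gCol (s 2)) (gCol (s 3))) := by
  rw [det_four]
  simp only [gDet, gMin, gEv_add, gEv_sub, gEv_mul hz, gMat, Matrix.submatrix_apply,
    Matrix.of_apply, id]
  ring

theorem gMat_det_eq_zero (hz : z ^ 2 = z + 1) {s : Fin 4 → Fin 15} (hs : StrictMono s) :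
    ((gMat z).submatrix id s).det = 0 ↔
      gDet (gCol (s 0)) (gCol (s 1)) (gCol (s 2)) (gCol (s 3)) = (0, 0) := by
  rw [gMat_det hz]
  exact gEv_eq_zero hz (gOk_all _ _ (hs (by decide)) _ (hs (by decide)) _ (hs (by decide)))

end

theorem matI4D4P0_eq (α : GaloisField 2 2) (hα : α ^ 2 = α + 1) : matI4D4P0 α = gMat α := by
  have h2 : (2 : GaloisField 2 2) = 0 := CharTwo.two_eq_zero
  ext i j
  fin_cases i <;> fin_cases j <;>
    simp [matI4D4P0, gMat, gEv, gCol, hα, CharTwo.neg_eq, h2] <;> ring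

section
variable {K F : Type*} [Field K] [Field F]

/-- Sets of columns correspond to injective families. -/
theorem linInd_range {n k : ℕ} (B : Matrix (Fin n) (Fin k) F) {s : Fin 4 → Fin k}
    (hs : Function.Injective s) :
    LinearIndependent F (fun j : Set.range s => B.transpose (j : Fin k)) ↔
      LinearIndependent F (fun t => B.transpose (s t)) :=
  (linearIndependent_equiv (Equiv.ofInjective s hs)
    (f := fun j : Set.range s => B.transpose (j : Fin k))).symm

theorem linInd_iff_det {k : ℕ} (A : Matrix (Fin 4) (Fin k) F) (s : Fin 4 → Fin k) :
    LinearIndependent F (fun t => A.transpose (s t)) ↔ (A.submatrix id s).det ≠ 0 := by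
  rw [← isUnit_iff_ne_zero, ← Matrix.isUnit_iff_isUnit_det,
    ← Matrix.linearIndependent_cols_iff_isUnit]
  rfl

theorem linInd_transfer {k : ℕ} (A : Matrix (Fin 4) (Fin k) K) (B : Matrix (Fin 4) (Fin k) F)
    (s₀ : Fin 4 → Fin k) (h₀ : (A.submatrix id s₀).det ≠ 0)
    (h : ∀ s : Fin 4 → Fin k, StrictMono s → (A.submatrix id s).det ≠ 0 →
      (B.submatrix id s).det ≠ 0) (S : Set (Fin k))
    (hS : LinearIndependent K (fun j : S => A.transpose (j : Fin k))) :
    LinearIndependent F (fun j : S => B.transpose (j : Fin k)) := by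
  classical
  have hS' : LinearIndepOn K A.transpose S := hS
  obtain ⟨b, -, hSb, hspan, hb⟩ := exists_linearIndepOn_extension hS' (Set.subset_univ S)
  have hb' : LinearIndependent K (fun j : b => A.transpose (j : Fin k)) := hb
  have htop : Submodule.span K (A.transpose '' b) = ⊤ := by
    have h1 : LinearIndependent K (fun t => A.transpose (s₀ t)) := (linInd_iff_det A s₀).2 h₀
    have h2 := h1.span_eq_top_of_card_eq_finrank (by simp)
    rw [eq_top_iff, ← h2, Submodule.span_le]
    rintro _ ⟨t, rfl⟩
    exact hspan ⟨s₀ t, trivial, rfl⟩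
  have hcard : Fintype.card b = 4 := by
    have h3 : Set.range (fun j : b => A.transpose (j : Fin k)) = A.transpose '' b := 
      (Set.image_eq_range _ _).symm
    have bas := Module.Basis.mk hb' (by rw [h3, htop])
    have := Module.finrank_eq_card_basis bas
    simpa using this.symm
  have hcard' : b.toFinset.card = 4 := by rw [Set.toFinset_card]; exact hcard
  set s : Fin 4 → Fin k := ⇑(b.toFinset.orderEmbOfFin hcard') with hsdef
  have hsm : StrictMono s := (b.toFinset.orderEmbOfFin hcard').strictMono
  have hr : Set.range s = b := by
    rw [hsdef, Finset.range_orderEmbOfFin]; simp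
  have hd : (A.submatrix id s).det ≠ 0 := by
    rw [← linInd_iff_det, ← linInd_range A hsm.injective, hr]
    exact hb'
  have hB := (linInd_range B hsm.injective).2 ((linInd_iff_det B s).2 (h s hsm hd))
  rw [hr] at hB
  have hB' : LinearIndepOn F B.transpose b := hB
  exact hB'.mono hSb

end

theorem realizes_of_root {K F : Type*} [Field K] [Field F] {w : K} (hw : w ^ 2 = w + 1)
    {z : F} (hz : z ^ 2 = z + 1) : RealizesColumnMatroid (gMat w) F := by
  have hm : StrictMono (![0, 1, 2, 3] : Fin 4 → Fin 15) := by decide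
  refine ⟨4, gMat z, fun S => ⟨?_, ?_⟩⟩
  · refine linInd_transfer _ _ ![0, 1, 2, 3] ?_ ?_ S
    · rw [Ne, gMat_det_eq_zero hz hm]; decide
    · intro s hs; rw [Ne, Ne, gMat_det_eq_zero hz hs, gMat_det_eq_zero hw hs]; exact id
  · refine linInd_transfer _ _ ![0, 1, 2, 3] ?_ ?_ S
    · rw [Ne, gMat_det_eq_zero hw hm]; decide
    · intro s hs; rw [Ne, Ne, gMat_det_eq_zero hz hs, gMat_det_eq_zero hw hs]; exact id

/-- Coordinates with respect to the first four columns. -/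
theorem exists_coords {K F : Type*} [Field K] [Field F] {w : K} (hw : w ^ 2 = w + 1)
    (h : RealizesColumnMatroid (gMat w) F) :
    ∃ C : Matrix (Fin 4) (Fin 15) F, (∀ i j : Fin 4, C i (![0, 1, 2, 3] j) = if i = j then 1 else 0) ∧
      ∀ s : Fin 4 → Fin 15, StrictMono s → ((C.submatrix id s).det = 0 ↔
        gDet (gCol (s 0)) (gCol (s 1)) (gCol (s 2)) (gCol (s 3)) = (0, 0)) := by
  classical
  obtain ⟨n, B, hB⟩ := h
  have hm : StrictMono (![0, 1, 2, 3] : Fin 4 → Fin 15) := by decide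
  have key : ∀ s : Fin 4 → Fin 15, StrictMono s →
      (LinearIndependent F (fun t => B.transpose (s t)) ↔
        gDet (gCol (s 0)) (gCol (s 1)) (gCol (s 2)) (gCol (s 3)) ≠ (0, 0)) := by
    intro s hs
    rw [← linInd_range B hs.injective, hB, linInd_range _ hs.injective, linInd_iff_det, Ne,
      gMat_det_eq_zero hw hs]
  have h0 := (key _ hm).2 (by decide)
  set v : Fin 4 → (Fin n → F) := fun t => B.transpose ((![0, 1, 2, 3] : Fin 4 → Fin 15) t) with hv
  have hmem : ∀ j, B.transpose j ∈ Submodule.span F (Set.range v) := by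
    intro j
    by_cases hj : j ∈ Set.range (![0, 1, 2, 3] : Fin 4 → Fin 15)
    · obtain ⟨t, rfl⟩ := hj
      exact Submodule.subset_span ⟨t, rfl⟩
    · by_contra hc
      have hS : LinearIndepOn F B.transpose (Set.range (![0, 1, 2, 3] : Fin 4 → Fin 15)) :=
        (linInd_range B hm.injective).2 h0
      have hrg : B.transpose '' (Set.range (![0, 1, 2, 3] : Fin 4 → Fin 15)) = Set.range v := 
        (Set.range_comp _ _).symm
      have h5 : LinearIndepOn F B.transpose
          (insert j (Set.range (![0, 1, 2, 3] : Fin 4 → Fin 15))) := by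
        refine hS.insert ?_
        rw [hrg]; exact hc
      have h6 := (hB _).1 h5
      have h7 := h6.fintype_card_le_finrank
      rw [Module.finrank_fin_fun, ← Set.toFinset_card, Set.toFinset_insert,
        Finset.card_insert_of_notMem (by simpa using hj), Set.toFinset_card,
        Set.card_range_of_injective hm.injective] at h7
      simp at h7
  choose c hc using fun j => (Submodule.mem_span_range_iff_exists_fun F).1 (hmem j)
  refine ⟨Matrix.of fun i j => c j i, ?_, ?_⟩
  · intro i j
    have h1 : ∑ t, c (![0, 1, 2, 3] j) t • v t = ∑ t, (if t = j then (1 : F) else 0) • v t := by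
      rw [hc]; simp [hv]
    have := Fintype.linearIndependent_iff.1 h0 (fun t => c (![0, 1, 2, 3] j) t - if t = j then (1 : F) else 0)
      (by simp only [sub_smul, Finset.sum_sub_distrib]; exact sub_eq_zero.2 h1) i
    exact sub_eq_zero.1 this
  · intro s hs
    rw [← not_iff_not, ← Ne, ← Ne, ← key s hs, ← linInd_iff_det]
    have hker : LinearMap.ker (Fintype.linearCombination F v) = ⊥ := by
      rw [LinearMap.ker_eq_bot]
      exact h0.fintypeLinearCombination_injective
    rw [← LinearMap.linearIndependent_iff _ hker]
    have : (⇑(Fintype.linearCombination F v) ∘ fun t =>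
        (Matrix.of fun i j => c j i).transpose (s t)) = fun t => B.transpose (s t) := by
      funext t
      rw [← hc (s t)]
      rfl
    rw [this]

/-- The final computation: the vanishing minors force a root of `x² = x + 1`. -/
theorem root_of_eqs {F : Type*} [Field F]
    {p0 p1 q0 q2 s0 s3 t1 t2 u1 u3 A0 A1 A2 A3 X0 X1 X2 G0 G1 G2 G3 : F}
    (np1 : p1 ≠ 0) (nq2 : q2 ≠ 0) (ns3 : s3 ≠ 0)
    (nt1 : t1 ≠ 0) (nu1 : u1 ≠ 0) (nA0 : A0 ≠ 0) (nX0 : X0 ≠ 0) (nG0 : G0 ≠ 0)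
    (ht : p0 * (t1 * q2) + q0 * (p1 * t2) = 0)
    (hu : -(p0 * (u1 * s3)) + -(s0 * (p1 * u3)) = 0)
    (hA3 : s0 * A3 - A0 * s3 = 0) (hA2 : t1 * A2 + -(A1 * t2) = 0)
    (hG2 : -(q0 * G2) + G0 * q2 = 0) (hG3 : -(u1 * G3) + G1 * u3 = 0)
    (hX : p0 * (X1 * q2) + q0 * (p1 * X2) - X0 * (p1 * q2) = 0)
    (hAX : -(A0 * X2) + X0 * A2 = 0) (hXG : X0 * G1 - G0 * X1 = 0)
    (hAG : A2 * G3 - G2 * A3 = 0) : ∃ z : F, z ^ 2 = z + 1 := by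
  have h1 : A2 * q0 * p1 = -(A1 * p0 * q2) := by
    apply mul_left_cancel₀ nt1
    linear_combination (q0 * p1) * hA2 + A1 * ht
  have h2 : G3 * s0 * p1 = -(G1 * p0 * s3) := by
    apply mul_left_cancel₀ nu1
    linear_combination (-s0 * p1) * hG3 - G1 * hu
  have h3 : A1 * G1 * p0 ^ 2 = G0 * A0 * p1 ^ 2 := by
    apply mul_left_cancel₀ (mul_ne_zero nq2 ns3)
    linear_combination (q0 * p1 * s0 * p1) * hAG - (G3 * s0 * p1) * h1 + (A1 * p0 * q2) * h2
      - (p1 ^ 2 * s0 * A3) * hG2 + (p1 ^ 2 * G0 * q2) * hA3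
  have h4 : p0 * A0 * G1 = G0 * (A1 * p0 + p1 * A0) := by
    apply mul_left_cancel₀ (mul_ne_zero nX0 nq2)
    linear_combination (G0 * A0) * hX + (p0 * q2 * A0) * hXG + (q0 * p1 * G0) * hAX
      - (G0 * X0) * h1
  have h5 : A0 ^ 2 * p1 ^ 2 = A1 ^ 2 * p0 ^ 2 + p0 * p1 * A0 * A1 := by
    apply mul_left_cancel₀ nG0
    linear_combination (-A0) * h3 + (p0 * A1) * h4
  refine ⟨-(p0 * A1) / (p1 * A0), ?_⟩
  field_simp
  linear_combination -h5

set_option linter.unusedSimpArgs false in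
theorem root_of_coords {F : Type*} [Field F] (C : Matrix (Fin 4) (Fin 15) F)
    (hI : ∀ i j : Fin 4, C i (![0, 1, 2, 3] j) = if i = j then 1 else 0)
    (H : ∀ s : Fin 4 → Fin 15, StrictMono s → ((C.submatrix id s).det = 0 ↔
        gDet (gCol (s 0)) (gCol (s 1)) (gCol (s 2)) (gCol (s 3)) = (0, 0))) :
    ∃ z : F, z ^ 2 = z + 1 := by
  have hZ : ∀ s : Fin 4 → Fin 15, StrictMono s →
      gDet (gCol (s 0)) (gCol (s 1)) (gCol (s 2)) (gCol (s 3)) = (0, 0) →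
      (C.submatrix id s).det = 0 := fun s hs h => (H s hs).2 h
  have hN : ∀ s : Fin 4 → Fin 15, StrictMono s →
      gDet (gCol (s 0)) (gCol (s 1)) (gCol (s 2)) (gCol (s 3)) ≠ (0, 0) →
      (C.submatrix id s).det ≠ 0 := fun s hs h => fun h' => h ((H s hs).1 h')
  simp only [det_four, Matrix.submatrix_apply, id] at hZ hN
  have e00 : C 0 0 = 1 := by simpa using hI 0 0
  have e01 : C 0 1 = 0 := by simpa using hI 0 1
  have e02 : C 0 2 = 0 := by simpa using hI 0 2
  have e03 : C 0 3 = 0 := by simpa using hI 0 3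
  have e10 : C 1 0 = 0 := by simpa using hI 1 0
  have e11 : C 1 1 = 1 := by simpa using hI 1 1
  have e12 : C 1 2 = 0 := by simpa using hI 1 2
  have e13 : C 1 3 = 0 := by simpa using hI 1 3
  have e20 : C 2 0 = 0 := by simpa using hI 2 0
  have e21 : C 2 1 = 0 := by simpa using hI 2 1
  have e22 : C 2 2 = 1 := by simpa using hI 2 2
  have e23 : C 2 3 = 0 := by simpa using hI 2 3
  have e30 : C 3 0 = 0 := by simpa using hI 3 0
  have e31 : C 3 1 = 0 := by simpa using hI 3 1
  have e32 : C 3 2 = 0 := by simpa using hI 3 2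
  have e33 : C 3 3 = 1 := by simpa using hI 3 3
  have z2_4 : C 2 4 = 0 := by
    simpa [e00, e01, e02, e03, e10, e11, e12, e13, e20, e21, e22, e23, e30, e31, e32, e33]
      using hZ ![0, 1, 3, 4] (by decide) (by decide)
  have z3_4 : C 3 4 = 0 := by
    simpa [e00, e01, e02, e03, e10, e11, e12, e13, e20, e21, e22, e23, e30, e31, e32, e33]
      using hZ ![0, 1, 2, 4] (by decide) (by decide)
  have z1_5 : C 1 5 = 0 := by
    simpa [e00, e01, e02, e03, e10, e11, e12, e13, e20, e21, e22, e23, e30, e31, e32, e33]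
      using hZ ![0, 2, 3, 5] (by decide) (by decide)
  have z3_5 : C 3 5 = 0 := by
    simpa [e00, e01, e02, e03, e10, e11, e12, e13, e20, e21, e22, e23, e30, e31, e32, e33]
      using hZ ![0, 1, 2, 5] (by decide) (by decide)
  have z1_6 : C 1 6 = 0 := by
    simpa [e00, e01, e02, e03, e10, e11, e12, e13, e20, e21, e22, e23, e30, e31, e32, e33]
      using hZ ![0, 2, 3, 6] (by decide) (by decide)
  have z2_6 : C 2 6 = 0 := by
    simpa [e00, e01, e02, e03, e10, e11, e12, e13, e20, e21, e22, e23, e30, e31, e32, e33]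
      using hZ ![0, 1, 3, 6] (by decide) (by decide)
  have z0_7 : C 0 7 = 0 := by
    simpa [e00, e01, e02, e03, e10, e11, e12, e13, e20, e21, e22, e23, e30, e31, e32, e33]
      using hZ ![1, 2, 3, 7] (by decide) (by decide)
  have z3_7 : C 3 7 = 0 := by
    simpa [e00, e01, e02, e03, e10, e11, e12, e13, e20, e21, e22, e23, e30, e31, e32, e33]
      using hZ ![0, 1, 2, 7] (by decide) (by decide)
  have z0_8 : C 0 8 = 0 := by
    simpa [e00, e01, e02, e03, e10, e11, e12, e13, e20, e21, e22, e23, e30, e31, e32, e33]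
      using hZ ![1, 2, 3, 8] (by decide) (by decide)
  have z2_8 : C 2 8 = 0 := by
    simpa [e00, e01, e02, e03, e10, e11, e12, e13, e20, e21, e22, e23, e30, e31, e32, e33]
      using hZ ![0, 1, 3, 8] (by decide) (by decide)
  have z3_11 : C 3 11 = 0 := by
    simpa [e00, e01, e02, e03, e10, e11, e12, e13, e20, e21, e22, e23, e30, e31, e32, e33]
      using hZ ![0, 1, 2, 11] (by decide) (by decide)
  have n1_4 : C 1 4 ≠ 0 := by
    simpa [e00, e01, e02, e03, e10, e11, e12, e13, e20, e21, e22, e23, e30, e31, e32, e33]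
      using hN ![0, 2, 3, 4] (by decide) (by decide)
  have n2_5 : C 2 5 ≠ 0 := by
    simpa [e00, e01, e02, e03, e10, e11, e12, e13, e20, e21, e22, e23, e30, e31, e32, e33]
      using hN ![0, 1, 3, 5] (by decide) (by decide)
  have n3_6 : C 3 6 ≠ 0 := by
    simpa [e00, e01, e02, e03, e10, e11, e12, e13, e20, e21, e22, e23, e30, e31, e32, e33]
      using hN ![0, 1, 2, 6] (by decide) (by decide)
  have n1_7 : C 1 7 ≠ 0 := by
    simpa [e00, e01, e02, e03, e10, e11, e12, e13, e20, e21, e22, e23, e30, e31, e32, e33]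
      using hN ![0, 2, 3, 7] (by decide) (by decide)
  have n1_8 : C 1 8 ≠ 0 := by
    simpa [e00, e01, e02, e03, e10, e11, e12, e13, e20, e21, e22, e23, e30, e31, e32, e33]
      using hN ![0, 2, 3, 8] (by decide) (by decide)
  have n0_10 : C 0 10 ≠ 0 := by
    simpa [e00, e01, e02, e03, e10, e11, e12, e13, e20, e21, e22, e23, e30, e31, e32, e33]
      using hN ![1, 2, 3, 10] (by decide) (by decide)
  have n0_11 : C 0 11 ≠ 0 := by
    simpa [e00, e01, e02, e03, e10, e11, e12, e13, e20, e21, e22, e23, e30, e31, e32, e33]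
      using hN ![1, 2, 3, 11] (by decide) (by decide)
  have n0_13 : C 0 13 ≠ 0 := by
    simpa [e00, e01, e02, e03, e10, e11, e12, e13, e20, e21, e22, e23, e30, e31, e32, e33]
      using hN ![1, 2, 3, 13] (by decide) (by decide)
  have d3_4_5_7 := hZ ![3, 4, 5, 7] (by decide) (by decide)
  simp [e00, e01, e02, e03, e10, e11, e12, e13, e20, e21, e22, e23, e30, e31, e32, e33,
    z2_4, z3_4, z1_5, z3_5, z1_6, z2_6, z0_7, z3_7, z0_8, z2_8, z3_11] at d3_4_5_7
  have d2_4_6_8 := hZ ![2, 4, 6, 8] (by decide) (by decide)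
  simp [e00, e01, e02, e03, e10, e11, e12, e13, e20, e21, e22, e23, e30, e31, e32, e33,
    z2_4, z3_4, z1_5, z3_5, z1_6, z2_6, z0_7, z3_7, z0_8, z2_8, z3_11] at d2_4_6_8
  have d1_2_6_10 := hZ ![1, 2, 6, 10] (by decide) (by decide)
  simp [e00, e01, e02, e03, e10, e11, e12, e13, e20, e21, e22, e23, e30, e31, e32, e33,
    z2_4, z3_4, z1_5, z3_5, z1_6, z2_6, z0_7, z3_7, z0_8, z2_8, z3_11] at d1_2_6_10
  have d0_3_7_10 := hZ ![0, 3, 7, 10] (by decide) (by decide)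
  simp [e00, e01, e02, e03, e10, e11, e12, e13, e20, e21, e22, e23, e30, e31, e32, e33,
    z2_4, z3_4, z1_5, z3_5, z1_6, z2_6, z0_7, z3_7, z0_8, z2_8, z3_11] at d0_3_7_10
  have d1_3_5_13 := hZ ![1, 3, 5, 13] (by decide) (by decide)
  simp [e00, e01, e02, e03, e10, e11, e12, e13, e20, e21, e22, e23, e30, e31, e32, e33,
    z2_4, z3_4, z1_5, z3_5, z1_6, z2_6, z0_7, z3_7, z0_8, z2_8, z3_11] at d1_3_5_13
  have d0_2_8_13 := hZ ![0, 2, 8, 13] (by decide) (by decide)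
  simp [e00, e01, e02, e03, e10, e11, e12, e13, e20, e21, e22, e23, e30, e31, e32, e33,
    z2_4, z3_4, z1_5, z3_5, z1_6, z2_6, z0_7, z3_7, z0_8, z2_8, z3_11] at d0_2_8_13
  have d3_4_5_11 := hZ ![3, 4, 5, 11] (by decide) (by decide)
  simp [e00, e01, e02, e03, e10, e11, e12, e13, e20, e21, e22, e23, e30, e31, e32, e33,
    z2_4, z3_4, z1_5, z3_5, z1_6, z2_6, z0_7, z3_7, z0_8, z2_8, z3_11] at d3_4_5_11
  have d1_3_10_11 := hZ ![1, 3, 10, 11] (by decide) (by decide)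
  simp [e00, e01, e02, e03, e10, e11, e12, e13, e20, e21, e22, e23, e30, e31, e32, e33,
    z2_4, z3_4, z1_5, z3_5, z1_6, z2_6, z0_7, z3_7, z0_8, z2_8, z3_11] at d1_3_10_11
  have d2_3_11_13 := hZ ![2, 3, 11, 13] (by decide) (by decide)
  simp [e00, e01, e02, e03, e10, e11, e12, e13, e20, e21, e22, e23, e30, e31, e32, e33,
    z2_4, z3_4, z1_5, z3_5, z1_6, z2_6, z0_7, z3_7, z0_8, z2_8, z3_11] at d2_3_11_13
  have d0_1_10_13 := hZ ![0, 1, 10, 13] (by decide) (by decide)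
  simp [e00, e01, e02, e03, e10, e11, e12, e13, e20, e21, e22, e23, e30, e31, e32, e33,
    z2_4, z3_4, z1_5, z3_5, z1_6, z2_6, z0_7, z3_7, z0_8, z2_8, z3_11] at d0_1_10_13
  exact root_of_eqs n1_4 n2_5 n3_6 n1_7 n1_8 n0_10 n0_11 n0_13 d3_4_5_7 d2_4_6_8 d1_2_6_10
    d0_3_7_10 d1_3_5_13 d0_2_8_13 d3_4_5_11 d1_3_10_11 d2_3_11_13 d0_1_10_13

/-- A field `F` realizes the column matroid of `[I₄ | D₄ | P₀]` iff `F` contains a root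
of `x² − x − 1` (the universal partial field of this matroid is the golden-mean partial
field `𝔾`). -/
theorem stmt_14 (α : GaloisField 2 2) (hα : α ^ 2 = α + 1) (F : Type*) [Field F] :
    RealizesColumnMatroid (matI4D4P0 α) F ↔ ∃ z : F, z ^ 2 = z + 1 := by
  rw [matI4D4P0_eq α hα]
  constructor
  · intro h
    obtain ⟨C, hI, H⟩ := exists_coords hα h
    exact root_of_coords C hI H
  · rintro ⟨z, hz⟩
    exact realizes_of_root hα hz
end
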